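/- Let t ≥ 2 be an integer and let c = (c_i)_{i≥1} be a cost vector of nonnegative reals with c_i ≥ 1 for all i ≥ t. For every ρ > 0 there exists n₀ such that for every n > n₀ and every simple graph G on n vertices, there exists a simple graph G̃ on n vertices such that θ_t(G, c) ≤ θ*_t(G̃, c) + ρ·n^t and π_t(G, c) ≤ π*_t(G̃, c) + ρ·n^t. -/

import Mathlib

open scoped Classical
open Finset

/-- `K` is a clique of `G`: a nonempty set of pairwise adjacent vertices. -/
def IsCliqueOf {V : Type} [Fintype V] [DecidableEq V] (G : SimpleGraph V) (K : Finset V) : Prop :=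
  K.Nonempty ∧ G.IsClique (K : Set V)

/-- Total `c`-cost of a weighting `f` of the finsets of vertices. -/
noncomputable def cliqueCost {V : Type} [Fintype V] [DecidableEq V]
    (c : ℕ → ℝ) (f : Finset V → ℝ) : ℝ :=
  ∑ K : Finset V, c K.card * f K

/-- `f` is a fractional `t`-clique cover of `G`. -/
def IsFracCover {V : Type} [Fintype V] [DecidableEq V]
    (t : ℕ) (G : SimpleGraph V) (f : Finset V → ℝ) : Prop :=
  (∀ K, 0 ≤ f K) ∧ (∀ K, ¬ IsCliqueOf G K → f K = 0) ∧
  ∀ T : Finset V, T.card = t → G.IsClique (T : Set V) →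
    1 ≤ ∑ K ∈ Finset.univ.filter (fun K => T ⊆ K), f K

/-- `f` is a fractional `t`-clique decomposition of `G`. -/
def IsFracDecomp {V : Type} [Fintype V] [DecidableEq V]
    (t : ℕ) (G : SimpleGraph V) (f : Finset V → ℝ) : Prop :=
  (∀ K, 0 ≤ f K) ∧ (∀ K, ¬ IsCliqueOf G K → f K = 0) ∧
  ∀ T : Finset V, T.card = t → G.IsClique (T : Set V) →
    ∑ K ∈ Finset.univ.filter (fun K => T ⊆ K), f K = 1

/-- `f` is an integer (`{0,1}`-valued) `t`-clique cover of `G`. -/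
def IsIntCover {V : Type} [Fintype V] [DecidableEq V]
    (t : ℕ) (G : SimpleGraph V) (f : Finset V → ℝ) : Prop :=
  IsFracCover t G f ∧ ∀ K, f K = 0 ∨ f K = 1

/-- `f` is an integer (`{0,1}`-valued) `t`-clique decomposition of `G`. -/
def IsIntDecomp {V : Type} [Fintype V] [DecidableEq V]
    (t : ℕ) (G : SimpleGraph V) (f : Finset V → ℝ) : Prop :=
  IsFracDecomp t G f ∧ ∀ K, f K = 0 ∨ f K = 1

/-- θ*_t(G,c): minimum total c-cost of a fractional t-clique cover. -/
noncomputable def thetaFrac {V : Type} [Fintype V] [DecidableEq V]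
    (t : ℕ) (G : SimpleGraph V) (c : ℕ → ℝ) : ℝ :=
  sInf { x | ∃ f, IsFracCover t G f ∧ x = cliqueCost c f }

/-- θ_t(G,c): minimum total c-cost of an integer t-clique cover. -/
noncomputable def thetaInt {V : Type} [Fintype V] [DecidableEq V]
    (t : ℕ) (G : SimpleGraph V) (c : ℕ → ℝ) : ℝ :=
  sInf { x | ∃ f, IsIntCover t G f ∧ x = cliqueCost c f }

/-- π*_t(G,c): minimum total c-cost of a fractional t-clique decomposition. -/
noncomputable def piFrac {V : Type} [Fintype V] [DecidableEq V]
    (t : ℕ) (G : SimpleGraph V) (c : ℕ → ℝ) : ℝ :=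
  sInf { x | ∃ f, IsFracDecomp t G f ∧ x = cliqueCost c f }

/-- π_t(G,c): minimum total c-cost of an integer t-clique decomposition. -/
noncomputable def piInt {V : Type} [Fintype V] [DecidableEq V]
    (t : ℕ) (G : SimpleGraph V) (c : ℕ → ℝ) : ℝ :=
  sInf { x | ∃ f, IsIntDecomp t G f ∧ x = cliqueCost c f }

/-- `G` is complete multipartite: vertices can be assigned to parts so that
adjacency holds exactly between distinct parts. -/
def IsCompleteMultipartite {V : Type} [Fintype V] [DecidableEq V]
    (G : SimpleGraph V) : Prop :=
  ∃ p : V → ℕ, ∀ u v, G.Adj u v ↔ p u ≠ p v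

/-!
Call the minimum cost of a fractional cover or decomposition of a graph, divided by the number of
`t`-sets of its vertices, its density. A uniformly random map `ψ` from `s` points to the vertices of
`G` pulls `G` back to a graph on `s` vertices. Pushing optimal weightings of all pullbacks forward
to `G` gives a fractional weighting of cliques of bounded size whose codegrees are negligible, so a
Rödl nibble rounds it to an integer one: up to `o(n ^ t)`, the integer optimum of `G` is at most
`n.choose t` times the mean density `a s` of the pullbacks. In a cover the cliques first have to be
made responsible for random subfamilies of their `t`-subsets, such that each `t`-clique receives
total weight one.

Conversely, it suffices that one `ψ` gives a pullback whose cover and decomposition densities are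
both at least `a s - o(1)`, because `G̃` can then be the blow-up of this pullback to `n` vertices.
Split `m * s` points into `m` blocks of `s` points. Up to averaging over permutations of the points,
the density of a pullback on `m * s` points is at most the mean density of its blocks, which is
concentrated around `a s`. In particular `a` does not increase along `s, m * s, m ^ 2 * s, …`, so it
hardly changes at some scale, simultaneously for both problems. At this scale the density of a
pullback rarely exceeds its mean by much, and hence it is also rarely far below its mean.
-/

/-! ### Random greedy matchings -/

section Greedy

variable {Ω I : Type*}

/-- One step of the greedy matching process on the hypergraph with edges `e i`: the proposed edge
`i` joins the matching `M` if it is disjoint from the edges already chosen. -/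
noncomputable def greedyStep (e : I → Finset Ω) (M : Finset I) (i : I) : Finset I :=
  if Disjoint (M.biUnion e) (e i) then insert i M else M

/-- The indicator that the matching `M` leaves every vertex of `A` uncovered. -/
noncomputable def freeInd (e : I → Finset Ω) (A : Finset Ω) (M : Finset I) : ℝ :=
  if Disjoint (M.biUnion e) A then 1 else 0

lemma freeInd_apply_empty (e : I → Finset Ω) (A : Finset Ω) : freeInd e A ∅ = 1 := by
  simp [freeInd]

lemma freeInd_nonneg (e : I → Finset Ω) (A : Finset Ω) (M : Finset I) : 0 ≤ freeInd e A M := by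
  unfold freeInd
  split_ifs <;> simp

lemma freeInd_le_one (e : I → Finset Ω) (A : Finset Ω) (M : Finset I) : freeInd e A M ≤ 1 := by
  unfold freeInd
  split_ifs <;> simp

lemma sum_freeInd_singleton (e : I → Finset Ω) (X : Finset Ω) (M : Finset I) :
    ∑ x ∈ X, freeInd e {x} M = ((X \ M.biUnion e).card : ℝ) := by
  simp only [freeInd, disjoint_singleton_right, sum_boole, sdiff_eq_filter]

lemma freeInd_greedyStep_sub (e : I → Finset Ω) (A : Finset Ω) (M : Finset I) (i : I) :
    freeInd e A (greedyStep e M i) - freeInd e A M =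
      -(if Disjoint (e i) A then 0 else freeInd e (A ∪ e i) M) := by
  by_cases hi : Disjoint (M.biUnion e) (e i)
  · by_cases hA : Disjoint (e i) A <;>
      simp [greedyStep, freeInd, biUnion_insert, disjoint_union_left, disjoint_union_right, hi, hA]
  · simp [greedyStep, freeInd, disjoint_union_right, hi]

lemma sum_greedyStep_sub {e : I → Finset Ω} (he : ∀ i, (e i).Nonempty) (cost : I → ℝ)
    (M : Finset I) (i : I) :
    ∑ j ∈ greedyStep e M i, cost j - ∑ j ∈ M, cost j = cost i * freeInd e (e i) M := by
  unfold greedyStep freeInd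
  split_ifs with h
  · have hi : i ∉ M := fun hi =>
      (he i).ne_empty (disjoint_self.mp (h.mono_left (subset_biUnion_of_mem e hi)))
    rw [sum_insert hi]
    ring
  · simp

lemma pairwiseDisjoint_greedyStep {e : I → Finset Ω} {M : Finset I}
    (hM : (M : Set I).PairwiseDisjoint e) (i : I) :
    (greedyStep e M i : Set I).PairwiseDisjoint e := by
  unfold greedyStep
  split_ifs with h
  · rw [coe_insert]
    exact hM.insert fun j hj _ => (disjoint_biUnion_left _ _ _ |>.mp h j hj).symm
  · exact hM

variable [Fintype I]

/-- The transition operator of the random greedy process: `greedyTransition e q F M` is the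
expected value of `F` after one step from `M`, where edge `i` is proposed with probability `q i`
and nothing is proposed with the remaining probability. -/
noncomputable def greedyTransition (e : I → Finset Ω) (q : I → ℝ) :
    (Finset I → ℝ) →ₗ[ℝ] Finset I → ℝ :=
  LinearMap.id + ∑ i, q i • (LinearMap.funLeft ℝ ℝ (greedyStep e · i) - LinearMap.id)

lemma greedyTransition_apply (e : I → Finset Ω) (q : I → ℝ) (F : Finset I → ℝ) (M : Finset I) :
    greedyTransition e q F M = F M + ∑ i, q i * (F (greedyStep e M i) - F M) := by
  simp [greedyTransition, LinearMap.funLeft_apply]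

/-- The expectation, as a linear functional, after `k` steps of the random greedy process started
at the empty matching, where step `j` proposes edge `i` with probability `p j i`. -/
noncomputable def greedyExp (e : I → Finset Ω) (p : ℕ → I → ℝ) : ℕ → (Finset I → ℝ) →ₗ[ℝ] ℝ
  | 0 => LinearMap.proj ∅
  | k + 1 => greedyExp e p k ∘ₗ greedyTransition e (p k)

variable {e : I → Finset Ω} {p : ℕ → I → ℝ}

@[simp] lemma greedyExp_zero (F : Finset I → ℝ) : greedyExp e p 0 F = F ∅ := rfl

lemma greedyExp_succ (k : ℕ) (F : Finset I → ℝ) :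
    greedyExp e p (k + 1) F = greedyExp e p k (greedyTransition e (p k) F) := rfl

@[simp] lemma greedyExp_one (k : ℕ) : greedyExp e p k 1 = 1 := by
  induction k with
  | zero => rfl
  | succ k ih =>
    have : greedyTransition e (p k) 1 = 1 := by
      ext M
      simp [greedyTransition_apply]
    rw [greedyExp_succ, this, ih]

lemma greedyExp_const (k : ℕ) (a : ℝ) : greedyExp e p k (fun _ => a) = a := by
  have : (fun _ : Finset I => a) = a • 1 := by
    ext
    simp
  rw [this, map_smul, greedyExp_one, smul_eq_mul, mul_one]

lemma greedyTransition_mono {q : I → ℝ} (hq : ∀ i, 0 ≤ q i) (hsum : ∑ i, q i ≤ 1)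
    {F G : Finset I → ℝ} {M : Finset I} (hM : F M ≤ G M)
    (hstep : ∀ i, F (greedyStep e M i) ≤ G (greedyStep e M i)) :
    greedyTransition e q F M ≤ greedyTransition e q G M := by
  have convex_combination : ∀ F : Finset I → ℝ, greedyTransition e q F M =
      (1 - ∑ i, q i) * F M + ∑ i, q i * F (greedyStep e M i) := fun F => by
    rw [greedyTransition_apply]
    simp only [mul_sub, sum_sub_distrib, ← sum_mul]
    ring
  rw [convex_combination, convex_combination]
  exact add_le_add (mul_le_mul_of_nonneg_left hM (sub_nonneg.mpr hsum))
    (sum_le_sum fun i _ => mul_le_mul_of_nonneg_left (hstep i) (hq i))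

lemma greedyExp_mono {k : ℕ} (hp : ∀ j < k, ∀ i, 0 ≤ p j i) (hsum : ∀ j < k, ∑ i, p j i ≤ 1)
    {F G : Finset I → ℝ} (h : ∀ M : Finset I, (M : Set I).PairwiseDisjoint e → F M ≤ G M) :
    greedyExp e p k F ≤ greedyExp e p k G := by
  induction k generalizing F G with
  | zero => exact h _ (by simp)
  | succ k ih =>
    exact ih (fun j hj => hp j (hj.trans k.lt_succ_self))
      (fun j hj => hsum j (hj.trans k.lt_succ_self)) fun M hM =>
        greedyTransition_mono (hp k k.lt_succ_self) (hsum k k.lt_succ_self) (h M hM) fun i =>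
          h _ (pairwiseDisjoint_greedyStep hM i)

lemma exists_le_greedyExp {k : ℕ} (hp : ∀ j < k, ∀ i, 0 ≤ p j i)
    (hsum : ∀ j < k, ∑ i, p j i ≤ 1) (F : Finset I → ℝ) :
    ∃ M : Finset I, (M : Set I).PairwiseDisjoint e ∧ F M ≤ greedyExp e p k F := by
  obtain ⟨M₀, hM₀, hmin⟩ := exists_min_image
    (univ.filter fun M : Finset I => (M : Set I).PairwiseDisjoint e) F
    ⟨∅, by simp⟩
  refine ⟨M₀, (mem_filter.mp hM₀).2, ?_⟩
  rw [← greedyExp_const (e := e) (p := p) k (F M₀)]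
  exact greedyExp_mono hp hsum fun M hM => hmin M (by simp [hM])

lemma greedyExp_freeInd_nonneg {k : ℕ} (hp : ∀ j < k, ∀ i, 0 ≤ p j i)
    (hsum : ∀ j < k, ∑ i, p j i ≤ 1) (A : Finset Ω) : 0 ≤ greedyExp e p k (freeInd e A) := by
  rw [← greedyExp_const (e := e) (p := p) k 0]
  exact greedyExp_mono hp hsum fun M _ => freeInd_nonneg e A M

lemma greedyExp_freeInd_le_one {k : ℕ} (hp : ∀ j < k, ∀ i, 0 ≤ p j i)
    (hsum : ∀ j < k, ∑ i, p j i ≤ 1) (A : Finset Ω) : greedyExp e p k (freeInd e A) ≤ 1 := by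
  rw [← greedyExp_const (e := e) (p := p) k 1]
  exact greedyExp_mono hp hsum fun M _ => freeInd_le_one e A M

lemma greedyExp_freeInd_succ (k : ℕ) (A : Finset Ω) :
    greedyExp e p (k + 1) (freeInd e A) = greedyExp e p k (freeInd e A) -
      ∑ i, p k i * (if Disjoint (e i) A then 0 else greedyExp e p k (freeInd e (A ∪ e i))) := by
  have htrans : greedyTransition e (p k) (freeInd e A) = freeInd e A -
      ∑ i, p k i • (if Disjoint (e i) A then 0 else freeInd e (A ∪ e i)) := by
    ext M
    simp only [greedyTransition_apply, freeInd_greedyStep_sub, Pi.sub_apply, Finset.sum_apply,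
      Pi.smul_apply, smul_eq_mul, mul_neg, sum_neg_distrib, ite_apply, Pi.zero_apply,
      ← sub_eq_add_neg]
  simp only [greedyExp_succ, htrans, map_sub, map_sum, map_smul, smul_eq_mul, apply_ite, map_zero]

lemma greedyExp_sum_succ (he : ∀ i, (e i).Nonempty) (k : ℕ) (cost : I → ℝ) :
    greedyExp e p (k + 1) (fun M => ∑ i ∈ M, cost i) =
      greedyExp e p k (fun M => ∑ i ∈ M, cost i) +
        ∑ i, p k i * (cost i * greedyExp e p k (freeInd e (e i))) := by
  have htrans : greedyTransition e (p k) (fun M => ∑ i ∈ M, cost i) =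
      (fun M => ∑ i ∈ M, cost i) + ∑ i, p k i • cost i • freeInd e (e i) := by
    ext M
    simp only [greedyTransition_apply, sum_greedyStep_sub he, Pi.add_apply, Finset.sum_apply,
      Pi.smul_apply, smul_eq_mul]
  simp only [greedyExp_succ, htrans, map_add, map_sum, map_smul, smul_eq_mul]

end Greedy

/-! ### The nibble -/

section Nibble

variable {Ω I : Type*} [Fintype I]

/-- The weights `w` form a perfect fractional matching of the vertex set `X` by the edges `e i`;
moreover the edges have at most `r` vertices and all codegrees are at most `δ`. -/
structure IsFracMatching (e : I → Finset Ω) (w : I → ℝ) (X : Finset Ω) (r : ℕ) (δ : ℝ) :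
    Prop where
  nonneg : ∀ i, 0 ≤ w i
  nonempty : ∀ i, (e i).Nonempty
  subset : ∀ i, e i ⊆ X
  card_le : ∀ i, (e i).card ≤ r
  degree : ∀ x ∈ X, ∑ i, (if x ∈ e i then w i else 0) = 1
  codegree : ∀ x ∈ X, ∀ y ∈ X, x ≠ y → ∑ i, (if x ∈ e i ∧ y ∈ e i then w i else 0) ≤ δ

/-- The rate at which the set function `q A`, an approximation of the probability that `A` is
uncovered, decreases when edge `i` is proposed at rate `w i / x ^ (#(e i) - 1)`. If every vertex is
uncovered with probability `x`, independently, then edge `i` is accepted at rate `w i * x`. -/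
noncomputable def nibbleDrift (e : I → Finset Ω) (w : I → ℝ) (x : ℝ) (q : Finset Ω → ℝ)
    (A : Finset Ω) : ℝ :=
  ∑ i, w i / x ^ ((e i).card - 1) * (if Disjoint (e i) A then 0 else q (A ∪ e i))

lemma nibbleDrift_sub (e : I → Finset Ω) (w : I → ℝ) (x : ℝ) (q q' : Finset Ω → ℝ)
    (A : Finset Ω) :
    nibbleDrift e w x (q - q') A = nibbleDrift e w x q A - nibbleDrift e w x q' A := by
  simp only [nibbleDrift, ← sum_sub_distrib, ← mul_sub, Pi.sub_apply]
  refine sum_congr rfl fun i _ => ?_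
  split_ifs <;> ring

variable {e : I → Finset Ω} {w : I → ℝ} {X : Finset Ω} {r : ℕ} {δ : ℝ}

namespace IsFracMatching

lemma sum_card_inter (hF : IsFracMatching e w X r δ) {A : Finset Ω} (hA : A ⊆ X) :
    ∑ i, w i * ((A ∩ e i).card : ℝ) = A.card := by
  have h : ∀ i, w i * ((A ∩ e i).card : ℝ) = ∑ x ∈ A, if x ∈ e i then w i else 0 := by
    intro i
    rw [← filter_mem_eq_inter, ← sum_filter, sum_const, nsmul_eq_mul, mul_comm]
  simp only [h]
  rw [sum_comm, sum_congr rfl fun x hx => hF.degree x (hA hx)]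
  simp

lemma sum_weight_le_card (hF : IsFracMatching e w X r δ) : ∑ i, w i ≤ X.card := by
  rw [← hF.sum_card_inter subset_rfl]
  refine sum_le_sum fun i _ => le_mul_of_one_le_right (hF.nonneg i) ?_
  rw [inter_eq_right.mpr (hF.subset i)]
  exact_mod_cast (hF.nonempty i).card_pos

lemma sum_card_offDiag_inter_le (hF : IsFracMatching e w X r δ) (hδ : 0 ≤ δ)
    {A : Finset Ω} (hA : A ⊆ X) :
    ∑ i, w i * ((A ∩ e i).offDiag.card : ℝ) ≤ (A.card : ℝ) ^ 2 * δ := by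
  have h : ∀ i, w i * ((A ∩ e i).offDiag.card : ℝ) =
      ∑ x ∈ A.offDiag, if x.1 ∈ e i ∧ x.2 ∈ e i then w i else 0 := by
    intro i
    rw [← sum_filter, sum_const, nsmul_eq_mul, mul_comm]
    congr 3
    ext x
    simp only [mem_offDiag, mem_inter, mem_filter]
    tauto
  simp only [h]
  rw [sum_comm]
  calc _ ≤ ∑ _x ∈ A.offDiag, δ := sum_le_sum fun x hx => by
        rw [mem_offDiag] at hx
        exact hF.codegree _ (hA hx.1) _ (hA hx.2.1) hx.2.2
    _ = (A.offDiag.card : ℝ) * δ := by simp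
    _ ≤ _ := by
        gcongr
        rw [offDiag_card]
        exact_mod_cast (Nat.sub_le _ _).trans (by rw [sq])

end IsFracMatching

/-- An edge meeting `A` in a single vertex contributes exactly its share to the drift of
`x ^ #A`; the offdiagonal pairs count the edges meeting `A` more than once. -/
lemma abs_card_inter_mul_pow_sub_le {A B : Finset Ω} (hB : B.Nonempty) {x : ℝ} (hx : 0 < x)
    (hx1 : x ≤ 1) :
    |((A ∩ B).card : ℝ) * x ^ A.card -
        (if Disjoint B A then 0 else x ^ (A ∪ B).card) / x ^ (B.card - 1)| ≤
      ((A ∩ B).offDiag.card : ℝ) := by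
  set m := (A ∩ B).card with hm
  have hpos : ¬ Disjoint B A ↔ 1 ≤ m := by
    rw [disjoint_comm, disjoint_iff_inter_eq_empty, ← card_eq_zero, Nat.one_le_iff_ne_zero]
  split_ifs with hd
  · have : m = 0 := by
      by_contra h
      exact hpos.mpr (Nat.one_le_iff_ne_zero.mpr h) hd
    simp [this]
  have hm1 : 1 ≤ m := hpos.mp hd
  have hunion : x ^ (A ∪ B).card / x ^ (B.card - 1) = x ^ (A.card + 1 - m) := by
    have hcard : (A ∪ B).card = (A.card + 1 - m) + (B.card - 1) := by
      have := card_union_add_card_inter A B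
      have := hB.card_pos
      have : m ≤ A.card := card_le_card inter_subset_left
      omega
    rw [hcard, pow_add]
    field_simp
  rw [hunion, offDiag_card, ← hm]
  rcases hm1.eq_or_lt with h1 | h2
  · simp [← h1]
  · have hle : m ≤ m * m - m := by
      have : 2 * m ≤ m * m := Nat.mul_le_mul_right m h2
      omega
    have hm2 : (2 : ℝ) ≤ m := by exact_mod_cast h2
    calc _ ≤ (m : ℝ) := by
          have := pow_le_one₀ hx.le hx1 (n := A.card)
          have := pow_le_one₀ hx.le hx1 (n := A.card + 1 - m)
          have : 0 < x ^ A.card := pow_pos hx _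
          have : 0 < x ^ (A.card + 1 - m) := pow_pos hx _
          rw [abs_le]
          constructor <;> nlinarith
      _ ≤ _ := by exact_mod_cast hle

lemma abs_one_sub_pow_sub_mul_le {h : ℝ} (h0 : 0 ≤ h) (h1 : h ≤ 1) (a : ℕ) :
    |1 - (1 - h) ^ a - h * a| ≤ h ^ 2 * (a : ℝ) ^ 2 := by
  have bernoulli : ∀ a : ℕ, 1 - a * h ≤ (1 - h) ^ a := fun a => by
    have := one_add_mul_le_pow (a := -h) (by linarith) a
    simpa [sub_eq_add_neg, mul_neg] using this
  have upper : (1 - h) ^ a ≤ 1 - a * h + (a : ℝ) ^ 2 * h ^ 2 := by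
    induction a with
    | zero => simp
    | succ a ih =>
      have := mul_le_mul_of_nonneg_right ih (show 0 ≤ 1 - h by linarith)
      have : 0 ≤ (a : ℝ) ^ 2 * h ^ 3 := by positivity
      have : 0 ≤ (a : ℝ) * h ^ 2 := by positivity
      rw [pow_succ]
      push_cast
      nlinarith [sq_nonneg h]
  rw [abs_le]
  constructor <;> nlinarith [bernoulli a, mul_nonneg (sq_nonneg h) (sq_nonneg (a : ℝ))]

namespace IsFracMatching

lemma abs_card_mul_pow_sub_nibbleDrift_le (hF : IsFracMatching e w X r δ) (hδ : 0 ≤ δ)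
    {A : Finset Ω} (hA : A ⊆ X) {x : ℝ} (hx : 0 < x) (hx1 : x ≤ 1) :
    |(A.card : ℝ) * x ^ A.card - nibbleDrift e w x (fun B => x ^ B.card) A| ≤
      (A.card : ℝ) ^ 2 * δ := by
  have hsum : (A.card : ℝ) * x ^ A.card - nibbleDrift e w x (fun B => x ^ B.card) A =
      ∑ i, w i * (((A ∩ e i).card : ℝ) * x ^ A.card -
        (if Disjoint (e i) A then 0 else x ^ (A ∪ e i).card) / x ^ ((e i).card - 1)) := by
    rw [nibbleDrift, ← hF.sum_card_inter hA, sum_mul, ← sum_sub_distrib]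
    exact sum_congr rfl fun i _ => by ring
  rw [hsum]
  refine (abs_sum_le_sum_abs _ _).trans
    ((sum_le_sum fun i _ => ?_).trans (hF.sum_card_offDiag_inter_le hδ hA))
  rw [abs_mul, abs_of_nonneg (hF.nonneg i)]
  exact mul_le_mul_of_nonneg_left (abs_card_inter_mul_pow_sub_le (hF.nonempty i) hx hx1)
    (hF.nonneg i)

lemma inv_pow_card_sub_one_le (hF : IsFracMatching e w X r δ) {x C : ℝ} (hx : 0 < x)
    (hx1 : x ≤ 1) (hC : (x ^ r)⁻¹ ≤ C) (i : I) : (x ^ ((e i).card - 1))⁻¹ ≤ C :=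
  (inv_anti₀ (pow_pos hx _) (pow_le_pow_of_le_one hx.le hx1
    ((Nat.sub_le _ _).trans (hF.card_le i)))).trans hC

lemma abs_nibbleDrift_le (hF : IsFracMatching e w X r δ) {x C b : ℝ} (hx : 0 < x) (hx1 : x ≤ 1)
    (hC : (x ^ r)⁻¹ ≤ C) {q : Finset Ω → ℝ} {A : Finset Ω} (hA : A ⊆ X)
    (hq : ∀ i, |q (A ∪ e i)| ≤ b) : |nibbleDrift e w x q A| ≤ A.card * (C * b) := by
  have hC0 : 0 ≤ C := le_trans (by positivity) hC
  rw [← hF.sum_card_inter hA, sum_mul]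
  refine (abs_sum_le_sum_abs _ _).trans (sum_le_sum fun i _ => ?_)
  have hw := hF.nonneg i
  have hb : 0 ≤ b := (abs_nonneg _).trans (hq i)
  split_ifs with hd
  · rw [mul_zero, abs_zero]
    positivity
  have hmeet : (1 : ℝ) ≤ (A ∩ e i).card := by
    rw [disjoint_comm, disjoint_iff_inter_eq_empty, ← card_eq_zero] at hd
    exact_mod_cast Nat.one_le_iff_ne_zero.mpr hd
  rw [abs_mul, abs_of_nonneg (by positivity), div_eq_mul_inv]
  calc w i * (x ^ ((e i).card - 1))⁻¹ * |q (A ∪ e i)|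
      ≤ w i * C * b := by
        gcongr
        · exact hF.inv_pow_card_sub_one_le hx hx1 hC i
        · exact hq i
    _ = w i * 1 * (C * b) := by ring
    _ ≤ _ := by gcongr

end IsFracMatching

/-- The four error terms of one nibble step are absorbed by raising the base `z`. -/
lemma nibble_error_growth {h δ η C z : ℝ} (hδ : 0 ≤ δ) (hh0 : 0 ≤ h) (hhδ : h ≤ δ)
    (hδη : 2 * δ ≤ η) (hC : 0 ≤ C) (hz : 2 ≤ z) (hz4 : z ≤ 4) (r a : ℕ) :
    η * z ^ a + h * (a * (C * (η * z ^ (a + r)))) + h ^ 2 * (a : ℝ) ^ 2 +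
        h * ((a : ℝ) ^ 2 * δ) ≤
      η * (z + h * (C * 4 ^ (r + 1) + 1)) ^ a := by
  have hη : 0 ≤ η := by linarith
  rcases a with _ | b
  · simp
  have hz0 : 0 ≤ z := by linarith
  have bernoulli : z ^ (b + 1) + (b + 1) * z ^ b * (h * (C * 4 ^ (r + 1) + 1)) ≤
      (z + h * (C * 4 ^ (r + 1) + 1)) ^ (b + 1) := by
    simpa using pow_add_mul_le_add_pow hz0
      (show 0 ≤ 2 * z + h * (C * 4 ^ (r + 1) + 1) by positivity) (b + 1)
  have transported : h * ((b + 1) * (C * (η * z ^ (b + 1 + r)))) ≤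
      η * ((b + 1) * z ^ b * (h * (C * 4 ^ (r + 1)))) := by
    calc h * ((b + 1) * (C * (η * z ^ (b + 1 + r))))
        = h * ((b + 1) * (C * (η * (z ^ b * z ^ (r + 1))))) := by ring
      _ ≤ h * ((b + 1) * (C * (η * (z ^ b * 4 ^ (r + 1))))) := by gcongr
      _ = _ := by ring
  have created : h ^ 2 * ((b : ℝ) + 1) ^ 2 + h * (((b : ℝ) + 1) ^ 2 * δ) ≤
      η * ((b + 1) * z ^ b * h) := by
    have hbz : (b : ℝ) + 1 ≤ z ^ b := calc
      (b : ℝ) + 1 ≤ 2 ^ b := by exact_mod_cast Nat.lt_two_pow_self (n := b)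
      _ ≤ z ^ b := by gcongr
    calc h ^ 2 * ((b : ℝ) + 1) ^ 2 + h * (((b : ℝ) + 1) ^ 2 * δ)
        ≤ h * δ * ((b : ℝ) + 1) ^ 2 + h * (((b : ℝ) + 1) ^ 2 * δ) := by
          rw [sq h]
          gcongr
      _ = (2 * δ) * h * (b + 1) * (b + 1) := by ring
      _ ≤ η * h * (b + 1) * z ^ b := by gcongr
      _ = _ := by ring
  push_cast
  calc _ ≤ η * (z ^ (b + 1) + (b + 1) * z ^ b * (h * (C * 4 ^ (r + 1) + 1))) := by linarith
    _ ≤ _ := by gcongr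

lemma IsFracMatching.abs_sub_mul_nibbleDrift_sub_pow_le (hF : IsFracMatching e w X r δ)
    {x z h η C : ℝ} (hδ : 0 ≤ δ) (hh0 : 0 ≤ h) (hh1 : h ≤ 1) (hhδ : h ≤ δ) (hδη : 2 * δ ≤ η)
    (hx : 0 < x) (hx1 : x ≤ 1) (hC : (x ^ r)⁻¹ ≤ C) (hz : 2 ≤ z) (hz4 : z ≤ 4)
    {q : Finset Ω → ℝ} (hq : ∀ A ⊆ X, |q A - x ^ A.card| ≤ η * z ^ A.card)
    {A : Finset Ω} (hA : A ⊆ X) :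
    |q A - h * nibbleDrift e w x q A - (x * (1 - h)) ^ A.card| ≤
      η * (z + h * (C * 4 ^ (r + 1) + 1)) ^ A.card := by
  have hη : 0 ≤ η := by linarith
  set q' : Finset Ω → ℝ := fun B => x ^ B.card
  have transported : |nibbleDrift e w x (q - q') A| ≤
      A.card * (C * (η * z ^ (A.card + r))) := by
    refine hF.abs_nibbleDrift_le hx hx1 hC hA fun i => ?_
    refine (hq _ (union_subset hA (hF.subset i))).trans
      (mul_le_mul_of_nonneg_left (pow_le_pow_right₀ (by linarith) ?_) hη)
    exact (card_union_le _ _).trans (Nat.add_le_add_left (hF.card_le i) _)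
  have discretized : |x ^ A.card - (x * (1 - h)) ^ A.card - h * (A.card * x ^ A.card)| ≤
      h ^ 2 * (A.card : ℝ) ^ 2 := by
    rw [show x ^ A.card - (x * (1 - h)) ^ A.card - h * (A.card * x ^ A.card) =
      x ^ A.card * (1 - (1 - h) ^ A.card - h * A.card) by rw [mul_pow]; ring, abs_mul,
      abs_of_nonneg (by positivity)]
    exact (mul_le_of_le_one_left (abs_nonneg _) (pow_le_one₀ hx.le hx1)).trans
      (abs_one_sub_pow_sub_mul_le hh0 hh1 _)
  have hsplit : q A - h * nibbleDrift e w x q A - (x * (1 - h)) ^ A.card =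
      (q A - x ^ A.card) + -(h * nibbleDrift e w x (q - q') A) +
        (x ^ A.card - (x * (1 - h)) ^ A.card - h * (A.card * x ^ A.card)) +
        h * (A.card * x ^ A.card - nibbleDrift e w x q' A) := by
    rw [nibbleDrift_sub]
    ring
  rw [hsplit]
  refine le_trans ?_ (nibble_error_growth hδ hh0 hhδ hδη (le_trans (by positivity) hC) hz hz4 r _)
  refine (abs_add_le _ _).trans (add_le_add ((abs_add_le _ _).trans (add_le_add
    ((abs_add_le _ _).trans (add_le_add (hq A hA) ?_)) discretized)) ?_)
  · rw [abs_neg, abs_mul, abs_of_nonneg hh0]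
    gcongr
  · rw [abs_mul, abs_of_nonneg hh0]
    exact mul_le_mul_of_nonneg_left (hF.abs_card_mul_pow_sub_nibbleDrift_le hδ hA hx hx1) hh0

/-- The proposal probabilities of the random greedy process: after `k` steps a vertex should be
uncovered with probability `(1 - h) ^ k`. -/
noncomputable def nibbleRate (e : I → Finset Ω) (w : I → ℝ) (h : ℝ) (k : ℕ) (i : I) : ℝ :=
  h * (w i / ((1 - h) ^ k) ^ ((e i).card - 1))

lemma IsFracMatching.nibbleRate_le (hF : IsFracMatching e w X r δ) {h C : ℝ} {k : ℕ}
    (hh0 : 0 ≤ h) (hh1 : h < 1) (hC : (((1 - h) ^ k) ^ r)⁻¹ ≤ C) (i : I) :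
    nibbleRate e w h k i ≤ h * w i * C := by
  rw [nibbleRate, div_eq_mul_inv, mul_assoc]
  exact mul_le_mul_of_nonneg_left (mul_le_mul_of_nonneg_left
    (hF.inv_pow_card_sub_one_le (pow_pos (sub_pos.mpr hh1) k)
      (pow_le_one₀ (sub_nonneg.mpr hh1.le) (by linarith)) hC i) (hF.nonneg i)) hh0

/-- The step size `h` is admissible for a nibble of `N` steps: it is at most the codegree bound
`δ`, the expected density of uncovered vertices satisfies `(1 - h) ^ k ≥ C ^ (-1 / r)` throughout,
and the proposal probabilities of each step have sum at most one. -/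
structure IsNibbleSchedule (e : I → Finset Ω) (w : I → ℝ) (r : ℕ) (δ h C : ℝ) (N : ℕ) :
    Prop where
  nonneg : 0 ≤ h
  lt_one : h < 1
  le_codegree : h ≤ δ
  inv_pow_le : ∀ k ≤ N, (((1 - h) ^ k) ^ r)⁻¹ ≤ C
  sum_rate_le : ∀ k < N, ∑ i, nibbleRate e w h k i ≤ 1

lemma greedyExp_nibbleRate_freeInd_succ (h : ℝ) (k : ℕ) (A : Finset Ω) :
    greedyExp e (nibbleRate e w h) (k + 1) (freeInd e A) =
      greedyExp e (nibbleRate e w h) k (freeInd e A) -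
        h * nibbleDrift e w ((1 - h) ^ k)
          (fun B => greedyExp e (nibbleRate e w h) k (freeInd e B)) A := by
  simp only [greedyExp_freeInd_succ, nibbleDrift, nibbleRate, mul_sum, mul_assoc]

namespace IsNibbleSchedule

variable {h C : ℝ} {N : ℕ}

lemma pow_pos (hS : IsNibbleSchedule e w r δ h C N) (k : ℕ) : 0 < (1 - h) ^ k :=
  _root_.pow_pos (sub_pos.mpr hS.lt_one) k

lemma pow_le_one (hS : IsNibbleSchedule e w r δ h C N) (k : ℕ) : (1 - h) ^ k ≤ 1 :=
  pow_le_one₀ (sub_nonneg.mpr hS.lt_one.le) (by linarith [hS.nonneg])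

lemma const_nonneg (hS : IsNibbleSchedule e w r δ h C N) : 0 ≤ C :=
  le_trans (by simp) (hS.inv_pow_le 0 (Nat.zero_le N))

lemma rate_nonneg (hS : IsNibbleSchedule e w r δ h C N) (hw : ∀ i, 0 ≤ w i) (k : ℕ) (i : I) :
    0 ≤ nibbleRate e w h k i :=
  mul_nonneg hS.nonneg (div_nonneg (hw i) (pow_nonneg (hS.pow_pos k).le _))

lemma abs_greedyExp_sub_le_of_window (hS : IsNibbleSchedule e w r δ h C N)
    (hF : IsFracMatching e w X r δ) {L : ℕ} (hL : L * (h * (C * 4 ^ (r + 1) + 1)) ≤ 2)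
    {η : ℝ} (hδη : 2 * δ ≤ η) {k₀ : ℕ}
    (hstart : ∀ A ⊆ X, |greedyExp e (nibbleRate e w h) k₀ (freeInd e A) -
      ((1 - h) ^ k₀) ^ A.card| ≤ η * 2 ^ A.card)
    {l : ℕ} (hl : l ≤ L) (hN : k₀ + l ≤ N) {A : Finset Ω} (hA : A ⊆ X) :
    |greedyExp e (nibbleRate e w h) (k₀ + l) (freeInd e A) - ((1 - h) ^ (k₀ + l)) ^ A.card| ≤
      η * 4 ^ A.card := by
  have hC0 := hS.const_nonneg
  have hh0 := hS.nonneg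
  have hη : 0 ≤ η := by linarith [hS.le_codegree]
  set z : ℕ → ℝ := fun l => 2 + l * (h * (C * 4 ^ (r + 1) + 1))
  have hz2 : ∀ l, 2 ≤ z l := fun l => le_add_of_nonneg_right (by positivity)
  have hz4 : ∀ l ≤ L, z l ≤ 4 := fun l hl => by
    have : (l : ℝ) * (h * (C * 4 ^ (r + 1) + 1)) ≤ L * (h * (C * 4 ^ (r + 1) + 1)) := by gcongr
    simp only [z]
    linarith
  have hwindow : |greedyExp e (nibbleRate e w h) (k₀ + l) (freeInd e A) -
      ((1 - h) ^ (k₀ + l)) ^ A.card| ≤ η * z l ^ A.card := by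
    induction l generalizing A with
    | zero => simpa [z] using hstart A hA
    | succ l ih =>
      have hstep := hF.abs_sub_mul_nibbleDrift_sub_pow_le (hh0.trans hS.le_codegree) hh0
        hS.lt_one.le hS.le_codegree hδη (hS.pow_pos (k₀ + l)) (hS.pow_le_one (k₀ + l))
        (hS.inv_pow_le (k₀ + l) (by omega)) (hz2 l) (hz4 l (by omega))
        (fun A hA => ih (by omega) (by omega) hA) hA
      rw [← add_assoc, greedyExp_nibbleRate_freeInd_succ, pow_succ (1 - h)]
      refine hstep.trans_eq ?_
      simp only [z]
      push_cast
      ring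
  refine hwindow.trans ?_
  gcongr
  exact hz4 l hl

lemma abs_greedyExp_sub_le_one (hS : IsNibbleSchedule e w r δ h C N) (hw : ∀ i, 0 ≤ w i) {k : ℕ}
    (hk : k ≤ N) (A : Finset Ω) :
    |greedyExp e (nibbleRate e w h) k (freeInd e A) - ((1 - h) ^ k) ^ A.card| ≤ 1 := by
  have hp := fun j (_ : j < k) i => hS.rate_nonneg hw j i
  have hsum := fun j (hj : j < k) => hS.sum_rate_le j (hj.trans_le hk)
  rw [abs_le]
  constructor <;> linarith [greedyExp_freeInd_nonneg (e := e) hp hsum A,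
    greedyExp_freeInd_le_one (e := e) hp hsum A, pow_nonneg (hS.pow_pos k).le A.card,
    pow_le_one₀ (hS.pow_pos k).le (hS.pow_le_one k) (n := A.card)]

/-- The steps are divided into `j` windows. In each the base of the error grows from `2` to at most
`4`; as the error is at most one, the base `2` is restored by passing from `η ^ 2` to `η`. -/
lemma abs_greedyExp_sub_le (hS : IsNibbleSchedule e w r δ h C N)
    (hF : IsFracMatching e w X r δ) {L : ℕ} (hL : L * (h * (C * 4 ^ (r + 1) + 1)) ≤ 2) (j : ℕ)
    {η : ℝ} (hη0 : 0 < η) (hη1 : η ≤ 1) (hδη : 2 * δ ≤ η ^ 2 ^ j) {k : ℕ} (hk : k ≤ N)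
    (hkj : k ≤ j * L) {A : Finset Ω} (hA : A ⊆ X) :
    |greedyExp e (nibbleRate e w h) k (freeInd e A) - ((1 - h) ^ k) ^ A.card| ≤
      η * 2 ^ A.card := by
  induction j generalizing η k A with
  | zero =>
    obtain rfl : k = 0 := by omega
    simp only [greedyExp_zero, freeInd_apply_empty, pow_zero, one_pow, sub_self, abs_zero]
    positivity
  | succ j ih =>
    have hsq0 : 0 < η ^ 2 := by positivity
    have hsq1 : η ^ 2 ≤ 1 := pow_le_one₀ hη0.le hη1
    have hδη' : 2 * δ ≤ (η ^ 2) ^ 2 ^ j := by rwa [← pow_mul, ← pow_succ']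
    rcases le_or_gt k (j * L) with hk' | hk'
    · refine (ih hsq0 hsq1 hδη' hk hk' hA).trans ?_
      gcongr
      exact pow_le_of_le_one hη0.le hη1 two_ne_zero
    obtain ⟨l, rfl⟩ := Nat.exists_eq_add_of_le hk'.le
    rcases le_or_gt (η * 2 ^ A.card) 1 with hsmall | hlarge
    · calc _ ≤ η ^ 2 * 4 ^ A.card := hS.abs_greedyExp_sub_le_of_window hF hL
              (hδη'.trans (pow_le_of_le_one hsq0.le hsq1 (by positivity)))
              (fun A hA => ih hsq0 hsq1 hδη' (by omega) le_rfl hA)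
              (by rw [Nat.succ_mul] at hkj; omega) hk hA
        _ = (η * 2 ^ A.card) * (η * 2 ^ A.card) := by
            rw [show (4 : ℝ) = 2 * 2 by norm_num, mul_pow]
            ring
        _ ≤ η * 2 ^ A.card := mul_le_of_le_one_left (by positivity) hsmall
    · exact (hS.abs_greedyExp_sub_le_one hF.nonneg hk A).trans hlarge.le

lemma nibbleRate_mul_pow_card (hS : IsNibbleSchedule e w r δ h C N) (he : ∀ i, (e i).Nonempty)
    (k : ℕ) (i : I) :
    nibbleRate e w h k i * ((1 - h) ^ k) ^ (e i).card = h * w i * (1 - h) ^ k := by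
  have := (hS.pow_pos k).ne'
  rw [nibbleRate, ← Nat.sub_add_cancel (he i).card_pos, pow_succ, Nat.add_sub_cancel]
  field_simp

lemma greedyExp_sum_cost_le (hS : IsNibbleSchedule e w r δ h C N) (hF : IsFracMatching e w X r δ)
    {η : ℝ} (hη : 0 ≤ η)
    (herr : ∀ k ≤ N, ∀ A ⊆ X, |greedyExp e (nibbleRate e w h) k (freeInd e A) -
      ((1 - h) ^ k) ^ A.card| ≤ η * 2 ^ A.card)
    {cost : I → ℝ} (hcost : ∀ i, 0 ≤ cost i) {k : ℕ} (hk : k ≤ N) :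
    greedyExp e (nibbleRate e w h) k (fun M => ∑ i ∈ M, cost i) ≤
      (1 - (1 - h) ^ k + k * h * (C * (η * 2 ^ r))) * ∑ i, w i * cost i := by
  induction k with
  | zero => simp
  | succ k ih =>
    have hterm : ∀ i, nibbleRate e w h k i *
        (cost i * greedyExp e (nibbleRate e w h) k (freeInd e (e i))) ≤
        h * ((1 - h) ^ k + C * (η * 2 ^ r)) * (w i * cost i) := fun i => by
      have hq : greedyExp e (nibbleRate e w h) k (freeInd e (e i)) ≤
          ((1 - h) ^ k) ^ (e i).card + η * 2 ^ r := by
        have := (abs_le.mp (herr k (by omega) (e i) (hF.subset i))).2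
        have : η * (2 : ℝ) ^ (e i).card ≤ η * 2 ^ r := by
          gcongr
          · norm_num
          · exact hF.card_le i
        linarith
      have hrate0 := hS.rate_nonneg hF.nonneg k i
      have hci := hcost i
      calc _ ≤ nibbleRate e w h k i * (cost i * (((1 - h) ^ k) ^ (e i).card + η * 2 ^ r)) := by
            gcongr
        _ = cost i * (nibbleRate e w h k i * ((1 - h) ^ k) ^ (e i).card)
            + nibbleRate e w h k i * (cost i * (η * 2 ^ r)) := by ring
        _ ≤ cost i * (h * w i * (1 - h) ^ k) + h * w i * C * (cost i * (η * 2 ^ r)) := by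
            rw [hS.nibbleRate_mul_pow_card hF.nonempty]
            gcongr
            exact hF.nibbleRate_le hS.nonneg hS.lt_one (hS.inv_pow_le k (by omega)) i
        _ = _ := by ring
    rw [greedyExp_sum_succ hF.nonempty]
    refine (add_le_add (ih (by omega)) (sum_le_sum fun i _ => hterm i)).trans_eq ?_
    rw [← mul_sum, ← add_mul]
    push_cast
    ring

lemma exists_pairwiseDisjoint (hS : IsNibbleSchedule e w r δ h C N)
    (hF : IsFracMatching e w X r δ) {η : ℝ} (hη : 0 ≤ η)
    (herr : ∀ k ≤ N, ∀ A ⊆ X, |greedyExp e (nibbleRate e w h) k (freeInd e A) -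
      ((1 - h) ^ k) ^ A.card| ≤ η * 2 ^ A.card)
    {cost : I → ℝ} (hcost0 : ∀ i, 0 ≤ cost i) (hcost1 : ∀ i, cost i ≤ 1) :
    ∃ M : Finset I, (M : Set I).PairwiseDisjoint e ∧
      ∑ i ∈ M, cost i + ((X \ M.biUnion e).card : ℝ) ≤
        ∑ i, w i * cost i + (N * h * (C * (η * 2 ^ r)) + ((1 - h) ^ N + η * 2)) * X.card := by
  obtain ⟨M, hM, hle⟩ := exists_le_greedyExp (e := e) (k := N)
    (fun k _ i => hS.rate_nonneg hF.nonneg k i) (fun k hk => hS.sum_rate_le k hk)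
    ((fun M => ∑ i ∈ M, cost i) + ∑ x ∈ X, freeInd e {x})
  refine ⟨M, hM, ?_⟩
  rw [map_add, map_sum, Pi.add_apply, Finset.sum_apply, sum_freeInd_singleton] at hle
  have hfree : ∑ x ∈ X, greedyExp e (nibbleRate e w h) N (freeInd e {x}) ≤
      ((1 - h) ^ N + η * 2) * X.card := by
    rw [mul_comm, ← nsmul_eq_mul]
    refine sum_le_card_nsmul _ _ _ fun x hx => ?_
    have := (abs_le.mp (herr N le_rfl {x} (singleton_subset_iff.mpr hx))).2
    simp only [card_singleton, pow_one] at this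
    linarith
  have hcost : greedyExp e (nibbleRate e w h) N (fun M => ∑ i ∈ M, cost i) ≤
      ∑ i, w i * cost i + N * h * (C * (η * 2 ^ r)) * X.card := by
    have hW : ∑ i, w i * cost i ≤ X.card :=
      (sum_le_sum fun i _ => mul_le_of_le_one_right (hF.nonneg i) (hcost1 i)).trans
        hF.sum_weight_le_card
    have hW0 : 0 ≤ ∑ i, w i * cost i :=
      sum_nonneg fun i _ => mul_nonneg (hF.nonneg i) (hcost0 i)
    have hC0 := hS.const_nonneg
    have hh0 := hS.nonneg
    calc _ ≤ (1 - (1 - h) ^ N + N * h * (C * (η * 2 ^ r))) * ∑ i, w i * cost i :=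
          hS.greedyExp_sum_cost_le hF hη herr hcost0 le_rfl
      _ ≤ (1 + N * h * (C * (η * 2 ^ r))) * ∑ i, w i * cost i := by
          gcongr
          linarith [hS.pow_pos N]
      _ = ∑ i, w i * cost i + N * h * (C * (η * 2 ^ r)) * ∑ i, w i * cost i := by ring
      _ ≤ _ := by gcongr
  linarith

end IsNibbleSchedule

lemma inv_one_sub_pow_le_exp {h : ℝ} (h0 : 0 ≤ h) (h1 : h ≤ 1 / 2) (k : ℕ) :
    ((1 - h) ^ k)⁻¹ ≤ Real.exp (2 * (k * h)) := by
  have hbase : (1 - h)⁻¹ ≤ Real.exp (2 * h) := by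
    refine le_trans ?_ (Real.add_one_le_exp (2 * h))
    rw [inv_le_iff_one_le_mul₀ (by linarith)]
    nlinarith
  calc ((1 - h) ^ k)⁻¹ = ((1 - h)⁻¹) ^ k := (inv_pow _ _).symm
    _ ≤ Real.exp (2 * h) ^ k := pow_le_pow_left₀ (inv_nonneg.mpr (by linarith)) hbase k
    _ = Real.exp (2 * (k * h)) := by
        rw [← Real.exp_nat_mul]
        congr 1
        ring

lemma one_sub_pow_le_exp {h : ℝ} (h1 : h ≤ 1) (k : ℕ) :
    (1 - h) ^ k ≤ Real.exp (-(k * h)) := by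
  calc (1 - h) ^ k ≤ Real.exp (-h) ^ k :=
        pow_le_pow_left₀ (sub_nonneg.mpr h1) (Real.one_sub_le_exp_neg h) k
    _ = Real.exp (-(k * h)) := by rw [← Real.exp_nat_mul, mul_neg]

lemma IsFracMatching.exists_isNibbleSchedule (hF : IsFracMatching e w X r δ) (hδ : 0 < δ)
    {τ : ℝ} (hτ : 0 < τ) {J : ℕ} (hJ : 0 < J) :
    ∃ (L : ℕ) (h : ℝ), (J : ℝ) * L * h = τ ∧
      IsNibbleSchedule e w r δ h (Real.exp (2 * τ) ^ r) (J * L) := by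
  set C := Real.exp (2 * τ) ^ r
  have hlim : Filter.Tendsto (fun L : ℕ => τ / J / L) Filter.atTop (nhds 0) :=
    tendsto_const_div_atTop_nhds_zero_nat _
  have hlim' : Filter.Tendsto (fun L : ℕ => τ / J / L * ((∑ i, w i) * C)) Filter.atTop
      (nhds 0) := by
    simpa using hlim.mul_const ((∑ i, w i) * C)
  obtain ⟨L, ⟨⟨hhalf, hle⟩, hsum⟩, hL⟩ :=
    (((hlim.eventually_le_const one_half_pos).and (hlim.eventually_le_const hδ)).and
      (hlim'.eventually_le_const one_pos)).and (Filter.eventually_gt_atTop 0) |>.exists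
  have hh0 : 0 ≤ τ / J / L := by positivity
  have htotal : (J : ℝ) * L * (τ / J / L) = τ := by field_simp
  have hinv : ∀ k ≤ J * L, (((1 - τ / J / L) ^ k) ^ r)⁻¹ ≤ C := fun k hk => by
    have hkh : (k : ℝ) * (τ / J / L) ≤ τ := by
      calc (k : ℝ) * (τ / J / L) ≤ (J * L : ℕ) * (τ / J / L) := by gcongr
        _ = τ := by rw [Nat.cast_mul, htotal]
    rw [← inv_pow]
    refine pow_le_pow_left₀ (inv_nonneg.mpr (pow_nonneg (by linarith) _)) ?_ r
    exact (inv_one_sub_pow_le_exp hh0 hhalf k).trans (Real.exp_le_exp.mpr (by linarith))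
  refine ⟨L, τ / J / L, htotal, hh0, by linarith, hle, hinv, fun k hk => ?_⟩
  calc ∑ i, nibbleRate e w (τ / J / L) k i ≤ ∑ i, τ / J / L * w i * C :=
        sum_le_sum fun i _ => hF.nibbleRate_le hh0 (by linarith) (hinv k hk.le) i
    _ = τ / J / L * ((∑ i, w i) * C) := by rw [← sum_mul, ← mul_sum, mul_assoc]
    _ ≤ 1 := hsum

/-- A weighted form of Pippenger's theorem on almost perfect matchings. -/
theorem exists_pairwiseDisjoint_of_isFracMatching (r : ℕ) {γ : ℝ} (hγ : 0 < γ) :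
    ∃ δ : ℝ, 0 < δ ∧ ∀ {Ω I : Type*} [Fintype I] (e : I → Finset Ω) (w : I → ℝ) (X : Finset Ω),
      IsFracMatching e w X r δ → ∀ cost : I → ℝ, (∀ i, 0 ≤ cost i) → (∀ i, cost i ≤ 1) →
      ∃ M : Finset I, (M : Set I).PairwiseDisjoint e ∧
        ∑ i ∈ M, cost i + ((X \ M.biUnion e).card : ℝ) ≤
          ∑ i, w i * cost i + γ * X.card := by
  obtain ⟨τ, hτγ, hτ0⟩ : ∃ τ : ℝ, Real.exp (-τ) ≤ γ / 3 ∧ 0 < τ :=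
    ((Real.tendsto_exp_neg_atTop_nhds_zero.eventually_le_const (by positivity)).and
      (Filter.eventually_gt_atTop 0)).exists
  set C : ℝ := Real.exp (2 * τ) ^ r
  obtain ⟨η, ⟨hη0, hη1⟩, hηγ, hητ⟩ : ∃ η : ℝ, (0 < η ∧ η ≤ 1) ∧ η * 2 ≤ γ / 3 ∧
      τ * (C * (η * 2 ^ r)) ≤ γ / 3 := by
    refine ⟨min 1 (min (γ / 6) (γ / 3 / (τ * (C * 2 ^ r)))), ⟨by positivity, min_le_left _ _⟩, ?_⟩
    have h6 := (min_le_right 1 _).trans (min_le_left (γ / 6) (γ / 3 / (τ * (C * 2 ^ r))))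
    have hC := (min_le_right 1 _).trans (min_le_right (γ / 6) (γ / 3 / (τ * (C * 2 ^ r))))
    rw [le_div_iff₀ (by positivity)] at hC
    exact ⟨by linarith, by linarith⟩
  obtain ⟨J, hJ⟩ := exists_nat_gt (τ * (C * 4 ^ (r + 1) + 1) / 2)
  have hJ0 : (0 : ℝ) < J := lt_trans (by positivity) hJ
  refine ⟨η ^ 2 ^ J / 2, by positivity, fun e w X hF cost hcost0 hcost1 => ?_⟩
  obtain ⟨L, h, hJLh, hS⟩ :=
    hF.exists_isNibbleSchedule (by positivity) hτ0 (Nat.cast_pos.mp hJ0)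
  have hL : L * (h * (C * 4 ^ (r + 1) + 1)) ≤ 2 := by
    refine le_of_mul_le_mul_left ?_ hJ0
    linear_combination 2 * hJ.le + (C * 4 ^ (r + 1) + 1) * hJLh
  obtain ⟨M, hM, hle⟩ := hS.exists_pairwiseDisjoint hF hη0.le
    (fun k hk A hA => hS.abs_greedyExp_sub_le hF hL J hη0 hη1 (by linarith) hk hk hA)
    hcost0 hcost1
  have hfree : (1 - h) ^ (J * L) ≤ γ / 3 := by
    refine (one_sub_pow_le_exp hS.lt_one.le _).trans ?_
    rwa [Nat.cast_mul, hJLh]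
  refine ⟨M, hM, hle.trans ?_⟩
  rw [Nat.cast_mul, hJLh]
  gcongr
  linarith

end Nibble

/-! ### Fractional clique weightings and their push-forwards -/

section FracVal

variable {V : Type} [Fintype V] [DecidableEq V]

/-- Fractional clique weightings whose total weight over each `t`-clique lies in `S`. Covers are
the case `S = [1, ∞)`, decompositions the case `S = {1}`. -/
def IsFracWeighting (S : Set ℝ) (t : ℕ) (G : SimpleGraph V) (f : Finset V → ℝ) : Prop :=
  (∀ K, 0 ≤ f K) ∧ (∀ K, ¬ IsCliqueOf G K → f K = 0) ∧
  ∀ T : Finset V, T.card = t → G.IsClique (T : Set V) →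
    ∑ K ∈ univ.filter (fun K => T ⊆ K), f K ∈ S

/-- The minimum cost of a fractional clique weighting, which specializes to `θ*_t(G, c)` and to
`π*_t(G, c)`. -/
noncomputable def fracVal (S : Set ℝ) (t : ℕ) (G : SimpleGraph V) (c : ℕ → ℝ) : ℝ :=
  sInf { x | ∃ f, IsFracWeighting S t G f ∧ x = cliqueCost c f }

lemma fracVal_Ici_one (t : ℕ) (G : SimpleGraph V) (c : ℕ → ℝ) :
    fracVal (Set.Ici 1) t G c = thetaFrac t G c := rfl

lemma fracVal_singleton_one (t : ℕ) (G : SimpleGraph V) (c : ℕ → ℝ) :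
    fracVal {1} t G c = piFrac t G c := rfl

variable {S : Set ℝ} {t : ℕ} {c : ℕ → ℝ}

lemma IsFracWeighting.cliqueCost_nonneg {G : SimpleGraph V} {f : Finset V → ℝ}
    (hf : IsFracWeighting S t G f) (hc : ∀ i, 1 ≤ i → 0 ≤ c i) : 0 ≤ cliqueCost c f := by
  refine sum_nonneg fun K _ => ?_
  by_cases hK : IsCliqueOf G K
  · exact mul_nonneg (hc _ hK.1.card_pos) (hf.1 K)
  · simp [hf.2.1 K hK]

lemma IsFracWeighting.fracVal_le {G : SimpleGraph V} {f : Finset V → ℝ}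
    (hf : IsFracWeighting S t G f) (hc : ∀ i, 1 ≤ i → 0 ≤ c i) :
    fracVal S t G c ≤ cliqueCost c f :=
  csInf_le ⟨0, by rintro x ⟨g, hg, rfl⟩; exact hg.cliqueCost_nonneg hc⟩ ⟨f, hf, rfl⟩

lemma fracVal_nonneg (G : SimpleGraph V) (hc : ∀ i, 1 ≤ i → 0 ≤ c i) : 0 ≤ fracVal S t G c :=
  Real.sInf_nonneg (by rintro x ⟨g, hg, rfl⟩; exact hg.cliqueCost_nonneg hc)

lemma isFracWeighting_indicator_card_eq (h1 : (1 : ℝ) ∈ S) (ht : 1 ≤ t) (G : SimpleGraph V) :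
    IsFracWeighting S t G (fun K => if K.card = t ∧ G.IsClique (K : Set V) then 1 else 0) := by
  refine ⟨fun K => by dsimp only; split_ifs <;> norm_num, fun K hK => if_neg fun h => hK ?_, ?_⟩
  · exact ⟨card_pos.mp (by omega), h.2⟩
  · intro T hT hTG
    rw [sum_eq_single T]
    · simpa [hT, hTG] using h1
    · intro K hK hne
      exact if_neg fun h => hne
        (eq_of_subset_of_card_le (mem_filter.mp hK).2 (h.1.trans hT.symm).le).symm
    · simp

lemma exists_cliqueCost_lt (h1 : (1 : ℝ) ∈ S) (ht : 1 ≤ t) (G : SimpleGraph V) {ε : ℝ}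
    (hε : 0 < ε) : ∃ f, IsFracWeighting S t G f ∧ cliqueCost c f < fracVal S t G c + ε := by
  obtain ⟨x, ⟨f, hf, rfl⟩, hx⟩ := Real.lt_sInf_add_pos
    (s := { x | ∃ f, IsFracWeighting S t G f ∧ x = cliqueCost c f })
    ⟨_, _, isFracWeighting_indicator_card_eq h1 ht G, rfl⟩ hε
  exact ⟨f, hf, hx⟩

lemma fracVal_le_mul_choose (h1 : (1 : ℝ) ∈ S) (ht : 1 ≤ t) (G : SimpleGraph V)
    (hc : ∀ i, 1 ≤ i → 0 ≤ c i) : fracVal S t G c ≤ c t * (Fintype.card V).choose t := by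
  refine ((isFracWeighting_indicator_card_eq h1 ht G).fracVal_le hc).trans ?_
  have hle : ∀ K : Finset V, c K.card * (if K.card = t ∧ G.IsClique (K : Set V) then 1 else 0) ≤
      if K ∈ powersetCard t univ then c t else 0 := by
    intro K
    by_cases hK : K.card = t
    · by_cases hG : G.IsClique (K : Set V) <;> simp [hK, hG, hc t ht]
    · simp [hK]
  refine (sum_le_sum fun K _ => hle K).trans_eq ?_
  rw [sum_ite_mem, univ_inter, sum_const, card_powersetCard, nsmul_eq_mul, mul_comm, card_univ]

lemma injOn_of_isClique {U V : Type*} {G : SimpleGraph V} {H : SimpleGraph U} {φ : U → V}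
    (hφ : ∀ u v, H.Adj u v → G.Adj (φ u) (φ v)) {K : Set U} (hK : H.IsClique K) :
    Set.InjOn φ K := by
  intro a ha b hb hab
  by_contra hne
  exact (hφ a b (hK ha hb hne)).ne hab

lemma isClique_image {U V : Type*} {G : SimpleGraph V} {H : SimpleGraph U} {φ : U → V}
    (hφ : ∀ u v, H.Adj u v → G.Adj (φ u) (φ v)) {K : Set U} (hK : H.IsClique K) :
    G.IsClique (φ '' K) := by
  rintro _ ⟨a, ha, rfl⟩ _ ⟨b, hb, rfl⟩ hab
  exact hφ a b (hK ha hb fun h => hab (congrArg φ h))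

lemma image_eq_iff_eq_filter {U V : Type*} [DecidableEq V] {φ : U → V} {K T' : Finset U}
    {T : Finset V} (hK : Set.InjOn φ K) (hT : T ⊆ K.image φ) (hT' : T' ⊆ K) :
    T'.image φ = T ↔ T' = K.filter fun u => φ u ∈ T := by
  constructor
  · rintro rfl
    ext u
    simp only [mem_filter, mem_image]
    exact ⟨fun hu => ⟨hT' hu, u, hu, rfl⟩,
      fun ⟨hu, u', hu', h⟩ => hK (hT' hu') hu h ▸ hu'⟩
  · rintro rfl
    ext v
    simp only [mem_image, mem_filter]
    refine ⟨fun ⟨u, hu, huv⟩ => huv ▸ hu.2, fun hv => ?_⟩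
    obtain ⟨u, hu, rfl⟩ := mem_image.mp (hT hv)
    exact ⟨u, ⟨hu, hv⟩, rfl⟩

lemma ite_subset_image_eq_sum {U V : Type*} [Fintype U] [DecidableEq U] [DecidableEq V]
    {φ : U → V} {K : Finset U} (hK : Set.InjOn φ K) {T : Finset V} (hT : T.card = t) (a : ℝ) :
    (if T ⊆ K.image φ then a else 0) =
      ∑ T' ∈ (powersetCard t univ).filter (fun T' : Finset U => T'.image φ = T),
        if T' ⊆ K then a else 0 := by
  split_ifs with h
  · have hpre := (image_eq_iff_eq_filter hK h (filter_subset _ _)).mpr rfl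
    rw [sum_eq_single (K.filter fun u => φ u ∈ T), if_pos (filter_subset _ _)]
    · intro T' hT' hne
      exact if_neg fun hsub =>
        hne ((image_eq_iff_eq_filter hK h hsub).mp (mem_filter.mp hT').2)
    · refine fun hnot => (hnot (mem_filter.mpr ⟨?_, hpre⟩)).elim
      rw [mem_powersetCard_univ, ← hT, ← congrArg card hpre]
      exact (card_image_of_injOn (hK.mono (coe_subset.mpr (filter_subset _ _)))).symm
  · refine (sum_eq_zero fun T' hT' => if_neg fun hsub => h ?_).symm
    rw [← (mem_filter.mp hT').2]
    exact image_subset_image hsub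

/-- The pairs `(j, T')` such that `φ j` maps the `t`-set `T'` onto `T`. -/
def liftPairs {J U V : Type*} [Fintype J] [Fintype U] [DecidableEq V]
    (φ : J → U → V) (t : ℕ) (T : Finset V) : Finset (J × Finset U) :=
  (univ ×ˢ powersetCard t univ).filter fun p => p.2.image (φ p.1) = T

lemma mem_liftPairs {J U V : Type*} [Fintype J] [Fintype U] [DecidableEq V]
    {φ : J → U → V} {T : Finset V} {p : J × Finset U} :
    p ∈ liftPairs φ t T ↔ p.2.card = t ∧ p.2.image (φ p.1) = T := by
  simp [liftPairs]

variable {J : Type*} {U : Type} [Fintype J] [Fintype U]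

/-- The sum of the images of the weightings `f j` under the maps `φ j`. -/
noncomputable def pushWeighting (φ : J → U → V) (f : J → Finset U → ℝ) (K : Finset V) : ℝ :=
  ∑ j, ∑ K' : Finset U, if K'.image (φ j) = K then f j K' else 0

variable [DecidableEq U]

lemma sum_filter_subset_pushWeighting {φ : J → U → V} {f : J → Finset U → ℝ}
    (hinj : ∀ j K, f j K ≠ 0 → Set.InjOn (φ j) K) {T : Finset V} (hT : T.card = t) :
    ∑ K ∈ univ.filter (fun K => T ⊆ K), pushWeighting φ f K =
      ∑ p ∈ liftPairs φ t T, ∑ K ∈ univ.filter (fun K => p.2 ⊆ K), f p.1 K := by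
  have hpush : ∑ K ∈ univ.filter (fun K => T ⊆ K), pushWeighting φ f K =
      ∑ j, ∑ K : Finset U, if T ⊆ K.image (φ j) then f j K else 0 := by
    simp only [pushWeighting]
    rw [sum_comm]
    refine sum_congr rfl fun j _ => ?_
    rw [sum_comm]
    simp only [sum_ite_eq, mem_filter_univ]
  have hlift : ∀ j (K : Finset U), (if T ⊆ K.image (φ j) then f j K else 0) =
      ∑ T' ∈ (powersetCard t univ).filter (fun T' : Finset U => T'.image (φ j) = T),
        if T' ⊆ K then f j K else 0 := fun j K => by
    by_cases h0 : f j K = 0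
    · simp [h0]
    · exact ite_subset_image_eq_sum (hinj j K h0) hT _
  simp only [hpush, hlift]
  rw [liftPairs, sum_filter, sum_product]
  refine sum_congr rfl fun j _ => ?_
  rw [sum_comm, sum_filter]
  simp only [sum_filter]

lemma cliqueCost_pushWeighting {φ : J → U → V} {f : J → Finset U → ℝ}
    (hinj : ∀ j K, f j K ≠ 0 → Set.InjOn (φ j) K) :
    cliqueCost c (pushWeighting φ f) = ∑ j, cliqueCost c (f j) := by
  simp only [cliqueCost, pushWeighting, mul_sum, mul_ite, mul_zero]
  rw [sum_comm]
  refine sum_congr rfl fun j _ => ?_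
  rw [sum_comm]
  refine sum_congr rfl fun K _ => ?_
  rw [sum_ite_eq, if_pos (mem_univ _)]
  by_cases h0 : f j K = 0
  · simp [h0]
  · rw [card_image_of_injOn (hinj j K h0)]

lemma isFracWeighting_pushWeighting (hS : Convex ℝ S) {G : SimpleGraph V}
    {H : J → SimpleGraph U} {φ : J → U → V}
    (hφ : ∀ j u v, (H j).Adj u v → G.Adj (φ j u) (φ j v)) {f : J → Finset U → ℝ}
    (hf : ∀ j, IsFracWeighting S t (H j) (f j)) {Z : ℝ} (hZ : 0 < Z)
    (hcount : ∀ T : Finset V, T.card = t → G.IsClique (T : Set V) →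
      (((liftPairs φ t T).filter fun p => (H p.1).IsClique (p.2 : Set U)).card : ℝ) = Z) :
    IsFracWeighting S t G (fun K => Z⁻¹ * pushWeighting φ f K) := by
  have hcl : ∀ j K, f j K ≠ 0 → IsCliqueOf (H j) K := fun j K => not_imp_comm.mp ((hf j).2.1 K)
  refine ⟨fun K => mul_nonneg (inv_nonneg.mpr hZ.le) (sum_nonneg fun j _ =>
    sum_nonneg fun K' _ => ?_), fun K hK => ?_, fun T hT hTG => ?_⟩
  · split_ifs
    exacts [(hf j).1 K', le_rfl]
  · refine mul_eq_zero_of_right _ (sum_eq_zero fun j _ => sum_eq_zero fun K' _ => ?_)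
    rw [ite_eq_right_iff]
    rintro rfl
    by_contra hne
    have hK' := hcl j K' hne
    exact hK ⟨hK'.1.image _, by simpa using isClique_image (hφ j) hK'.2⟩
  · rw [← mul_sum, sum_filter_subset_pushWeighting
      (fun j K h0 => injOn_of_isClique (hφ j) (hcl j K h0).2) hT]
    have hcliques : ∑ p ∈ liftPairs φ t T, ∑ K ∈ univ.filter (fun K => p.2 ⊆ K), f p.1 K =
        ∑ p ∈ (liftPairs φ t T).filter fun p => (H p.1).IsClique (p.2 : Set U),
          ∑ K ∈ univ.filter (fun K => p.2 ⊆ K), f p.1 K := by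
      refine (sum_subset (filter_subset _ _) fun p hp hpP => ?_).symm
      refine sum_eq_zero fun K hK => (hf p.1).2.1 K fun hcl => hpP ?_
      exact mem_filter.mpr ⟨hp, hcl.2.subset (coe_subset.mpr (mem_filter.mp hK).2)⟩
    rw [hcliques, mul_sum]
    refine hS.sum_mem (fun _ _ => (inv_pos.mpr hZ).le) ?_ fun p hp => ?_
    · rw [sum_const, nsmul_eq_mul, hcount T hT hTG, mul_inv_cancel₀ hZ.ne']
    · rw [mem_filter, mem_liftPairs] at hp
      exact (hf p.1).2.2 p.2 hp.1.1 hp.2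

theorem fracVal_le_of_homs (hS : Convex ℝ S) (h1 : (1 : ℝ) ∈ S) (ht : 1 ≤ t)
    (hc : ∀ i, 1 ≤ i → 0 ≤ c i) (G : SimpleGraph V) (H : J → SimpleGraph U) (φ : J → U → V)
    (hφ : ∀ j u v, (H j).Adj u v → G.Adj (φ j u) (φ j v)) {Z : ℝ} (hZ : 0 < Z)
    (hcount : ∀ T : Finset V, T.card = t → G.IsClique (T : Set V) →
      (((liftPairs φ t T).filter fun p => (H p.1).IsClique (p.2 : Set U)).card : ℝ) = Z) :
    fracVal S t G c ≤ Z⁻¹ * ∑ j, fracVal S t (H j) c := by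
  refine le_of_forall_pos_le_add fun ε hε => ?_
  have hε' : 0 < ε * Z / (Fintype.card J + 1) := by positivity
  choose f hf hcost using fun j => exists_cliqueCost_lt (c := c) h1 ht (H j) hε'
  have hinj : ∀ j K, f j K ≠ 0 → Set.InjOn (φ j) K := fun j K h0 =>
    injOn_of_isClique (hφ j) (not_imp_comm.mp ((hf j).2.1 K) h0).2
  calc fracVal S t G c ≤ cliqueCost c (fun K => Z⁻¹ * pushWeighting φ f K) :=
        (isFracWeighting_pushWeighting hS hφ hf hZ hcount).fracVal_le hc
    _ = Z⁻¹ * ∑ j, cliqueCost c (f j) := by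
        rw [← cliqueCost_pushWeighting hinj]
        simp only [cliqueCost, mul_sum]
        exact sum_congr rfl fun K _ => by ring
    _ ≤ Z⁻¹ * ∑ j, (fracVal S t (H j) c + ε * Z / (Fintype.card J + 1)) := by
        gcongr with j
        exact (hcost j).le
    _ = Z⁻¹ * ∑ j, fracVal S t (H j) c + ε * (Fintype.card J / (Fintype.card J + 1)) := by
        rw [sum_add_distrib, sum_const, card_univ, nsmul_eq_mul]
        field_simp
    _ ≤ Z⁻¹ * ∑ j, fracVal S t (H j) c + ε * 1 := by
        gcongr
        rw [div_le_one (by positivity)]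
        linarith
    _ = _ := by rw [mul_one]

end FracVal

/-! ### Symmetric families of maps -/

open scoped BigOperators

section SymmFamily

/-- A family of maps into `V` is symmetric if it is invariant under permutations of `V`, so that all
`t`-sets of `V` have equally many lifts. -/
def IsSymmFamily {J U V : Type*} (φ : J → U → V) : Prop :=
  ∀ τ : Equiv.Perm V, ∃ e : Equiv.Perm J, ∀ j, φ (e j) = τ ∘ φ j

lemma exists_perm_image_eq {V : Type*} [Finite V] [DecidableEq V] {T₁ T₂ : Finset V}
    (h : T₁.card = T₂.card) : ∃ τ : Equiv.Perm V, T₁.image τ = T₂ := by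
  let e : {x // x ∈ T₁} ≃ {x // x ∈ T₂} := equivOfCardEq h
  refine ⟨e.extendSubtype, eq_of_subset_of_card_le ?_ ?_⟩
  · exact image_subset_iff.mpr fun x hx => e.extendSubtype_mem x hx
  · rw [card_image_of_injective _ e.extendSubtype.injective, h]

section Counting

variable {J U V : Type*} [Fintype J] [Fintype U] [DecidableEq V] {t : ℕ}

lemma IsSymmFamily.card_liftPairs_eq [Finite V] {φ : J → U → V} (hφ : IsSymmFamily φ)
    {T₁ T₂ : Finset V} (h : T₁.card = T₂.card) :
    (liftPairs φ t T₁).card = (liftPairs φ t T₂).card := by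
  obtain ⟨τ, rfl⟩ := exists_perm_image_eq h
  obtain ⟨e, he⟩ := hφ τ
  refine card_equiv (e.prodCongr (Equiv.refl _)) fun p => ?_
  simp only [mem_liftPairs, Equiv.prodCongr_apply, Prod.map, Equiv.refl_apply, he,
    ← image_image, (image_injective τ.injective).eq_iff]

/-- The pairs `(j, T')` with `T'` a `t`-set on which `φ j` is injective. -/
def injPairs (φ : J → U → V) (t : ℕ) : Finset (J × Finset U) :=
  (univ ×ˢ powersetCard t univ).filter fun p => Set.InjOn (φ p.1) p.2

lemma mem_injPairs {φ : J → U → V} {p : J × Finset U} :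
    p ∈ injPairs φ t ↔ p.2.card = t ∧ Set.InjOn (φ p.1) p.2 := by
  simp [injPairs]

lemma IsSymmFamily.card_liftPairs_mul_choose [Fintype V] {φ : J → U → V}
    (hφ : IsSymmFamily φ) {T : Finset V} (hT : T.card = t) :
    (liftPairs φ t T).card * (Fintype.card V).choose t = (injPairs φ t).card := by
  have hmaps : ∀ p ∈ injPairs φ t, p.2.image (φ p.1) ∈ powersetCard t (univ : Finset V) := by
    intro p hp
    rw [mem_injPairs] at hp
    rw [mem_powersetCard_univ, card_image_of_injOn hp.2, hp.1]
  have hfibre : ∀ T' ∈ powersetCard t (univ : Finset V),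
      ((injPairs φ t).filter fun p => p.2.image (φ p.1) = T').card = (liftPairs φ t T).card := by
    intro T' hT'
    rw [mem_powersetCard_univ] at hT'
    rw [hφ.card_liftPairs_eq (hT.trans hT'.symm)]
    congr 1
    ext p
    rw [mem_filter, mem_injPairs, mem_liftPairs]
    refine ⟨fun h => ⟨h.1.1, h.2⟩, fun h => ⟨⟨h.1, injOn_of_card_image_eq ?_⟩, h.2⟩⟩
    rw [h.2, h.1, hT']
  rw [card_eq_sum_card_fiberwise hmaps, sum_congr rfl hfibre, sum_const, card_powersetCard,
    card_univ, smul_eq_mul, mul_comm]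

lemma card_injPairs_of_injective {φ : J → U → V} (hφ : ∀ j, Function.Injective (φ j)) :
    (injPairs φ t).card = Fintype.card J * (Fintype.card U).choose t := by
  rw [injPairs, filter_true_of_mem fun p _ => (hφ p.1).injOn, card_product, card_powersetCard,
    card_univ, card_univ]

end Counting

section Density

variable {U V : Type} [Fintype U] [DecidableEq U] [Fintype V] [DecidableEq V]
  {S : Set ℝ} {t : ℕ} {c : ℕ → ℝ}

lemma isClique_comap_of_image {U V : Type*} {G : SimpleGraph V} {φ : U → V} {K : Set U}
    (hφ : Set.InjOn φ K) (hK : G.IsClique (φ '' K)) : (G.comap φ).IsClique K :=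
  fun _ ha _ hb hab =>
    hK (Set.mem_image_of_mem φ ha) (Set.mem_image_of_mem φ hb) fun h => hab (hφ ha hb h)

/-- The minimum cost of a fractional clique weighting per `t`-set of vertices; it is `0`, through
division by zero, on fewer than `t` vertices. -/
noncomputable def fracDensity (S : Set ℝ) (t : ℕ) (G : SimpleGraph V) (c : ℕ → ℝ) : ℝ :=
  fracVal S t G c / (Fintype.card V).choose t

lemma fracDensity_nonneg (G : SimpleGraph V) (hc : ∀ i, 1 ≤ i → 0 ≤ c i) :
    0 ≤ fracDensity S t G c :=
  div_nonneg (fracVal_nonneg G hc) (Nat.cast_nonneg _)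

lemma fracDensity_le (h1 : (1 : ℝ) ∈ S) (ht : 1 ≤ t) (G : SimpleGraph V)
    (hc : ∀ i, 1 ≤ i → 0 ≤ c i) : fracDensity S t G c ≤ c t :=
  div_le_of_le_mul₀ (Nat.cast_nonneg _) (hc t ht) (fracVal_le_mul_choose h1 ht G hc)

theorem IsSymmFamily.fracDensity_le_average {J : Type*} [Fintype J] [Nonempty J] {φ : J → U → V}
    (hsymm : IsSymmFamily φ) (hφ : ∀ j, Function.Injective (φ j)) (hS : Convex ℝ S)
    (h1 : (1 : ℝ) ∈ S) (ht : 1 ≤ t) (hc : ∀ i, 1 ≤ i → 0 ≤ c i) (hU : t ≤ Fintype.card U)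
    (G : SimpleGraph V) :
    fracDensity S t G c ≤ 𝔼 j, fracDensity S t (G.comap (φ j)) c := by
  have hUV : Fintype.card U ≤ Fintype.card V :=
    Fintype.card_le_of_injective _ (hφ (Classical.arbitrary J))
  have hCV : (0 : ℝ) < (Fintype.card V).choose t := mod_cast Nat.choose_pos (hU.trans hUV)
  have hCU : (0 : ℝ) < (Fintype.card U).choose t := mod_cast Nat.choose_pos hU
  have : (0 : ℝ) < Fintype.card J := mod_cast Fintype.card_pos
  have hcard : ∀ T : Finset V, T.card = t → ((liftPairs φ t T).card : ℝ) =
      Fintype.card J * (Fintype.card U).choose t / (Fintype.card V).choose t := by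
    intro T hT
    rw [eq_div_iff hCV.ne']
    exact_mod_cast (hsymm.card_liftPairs_mul_choose hT).trans (card_injPairs_of_injective hφ)
  have hhoms := fracVal_le_of_homs hS h1 ht hc G (fun j => G.comap (φ j)) φ (fun _ _ _ h => h)
    (Z := Fintype.card J * (Fintype.card U).choose t / (Fintype.card V).choose t)
    (by positivity) fun T hT hTG => by
      rw [filter_true_of_mem fun p hp => ?_, hcard T hT]
      refine isClique_comap_of_image (hφ p.1).injOn ?_
      rw [← coe_image, (mem_liftPairs.mp hp).2]
      exact hTG
  simp only [fracDensity]
  rw [Fintype.expect_eq_sum_div_card, div_le_iff₀ hCV, ← sum_div]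
  refine hhoms.trans_eq ?_
  field_simp

end Density

end SymmFamily

/-! ### Blow-ups -/

section BlowUp

/-- The blow-up of `H` along `β`, with the vertices outside `W` isolated. -/
def blowUp {U V : Type*} (H : SimpleGraph U) (β : V → U) (W : Finset V) : SimpleGraph V where
  Adj v w := v ∈ W ∧ w ∈ W ∧ H.Adj (β v) (β w)
  symm := ⟨fun _ _ h => ⟨h.2.1, h.1, h.2.2.symm⟩⟩
  loopless := ⟨fun _ h => h.2.2.ne rfl⟩

lemma injOn_image_of_section {U V : Type*} [DecidableEq V] {β : V → U} {T : Finset U} :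
    Set.InjOn (fun f : T → V => univ.image f) {f | ∀ u, β (f u) = u} := by
  intro f hf g hg hfg
  funext u
  have hmem : f u ∈ univ.image g := by
    rw [← show univ.image f = univ.image g from hfg]
    exact mem_image_of_mem f (mem_univ u)
  obtain ⟨u', -, hu'⟩ := mem_image.mp hmem
  have : u' = u := Subtype.ext (by rw [← hf u, ← hu', hg u'])
  rw [← hu', this]

lemma exists_section_image_eq {U V : Type*} [DecidableEq U] [DecidableEq V] {β : V → U}
    {T : Finset U} {T' : Finset V} (hcard : T'.card = T.card) (himg : T'.image β = T) :
    ∃ f : T → V, (∀ u, β (f u) = u) ∧ univ.image f = T' := by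
  have hlift : ∀ u : T, ∃ v ∈ T', β v = u := fun u => mem_image.mp (himg ▸ u.2)
  choose f hfT' hf using hlift
  refine ⟨f, hf, eq_of_subset_of_card_le (image_subset_iff.mpr fun u _ => hfT' u) ?_⟩
  rw [card_image_of_injective _ fun u v h => Subtype.ext (by rw [← hf u, h, hf v]), card_univ,
    Fintype.card_coe, hcard]

lemma card_filter_image_eq_of_card_fibre_eq {U V : Type*} [DecidableEq U]
    {β : V → U} {W : Finset V} {m : ℕ} (hm : ∀ u, (W.filter fun v => β v = u).card = m)
    (T : Finset U) :
    ((powersetCard T.card W).filter fun T' => T'.image β = T).card = m ^ T.card := by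
  set F : Finset (T → V) := Fintype.piFinset fun u => W.filter fun v => β v = u with hF
  have hmem : ∀ f, f ∈ F ↔ ∀ u, f u ∈ W ∧ β (f u) = u := fun f => by
    simp only [hF, Fintype.mem_piFinset, mem_filter]
  have hFcard : F.card = m ^ T.card := by simp [hF, hm]
  have himage : ((powersetCard T.card W).filter fun T' => T'.image β = T) =
      F.image fun f => univ.image f := by
    ext T'
    simp only [mem_filter, mem_powersetCard, mem_image]
    constructor
    · rintro ⟨⟨hW, hcard⟩, himg⟩
      obtain ⟨f, hf, rfl⟩ := exists_section_image_eq hcard himg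
      exact ⟨f, (hmem f).mpr fun u => ⟨hW (mem_image_of_mem f (mem_univ u)), hf u⟩, rfl⟩
    · rintro ⟨f, hf, rfl⟩
      rw [hmem] at hf
      refine ⟨⟨image_subset_iff.mpr fun u _ => (hf u).1, ?_⟩, ?_⟩
      · rw [card_image_of_injective _ fun u v h => Subtype.ext (by rw [← (hf u).2, h, (hf v).2]),
          card_univ, Fintype.card_coe]
      · ext u
        simp only [image_image, mem_image, mem_univ, true_and, Function.comp_apply, (hf _).2]
        simp
  rw [himage, card_image_of_injOn, hFcard]
  exact injOn_image_of_section.mono fun f hf u => ((hmem f).mp hf u).2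

lemma isClique_blowUp_iff {U V : Type*} [DecidableEq U] {t : ℕ} (ht : 2 ≤ t)
    {H : SimpleGraph U} {β : V → U} {W : Finset V} {T : Finset U} (hT : T.card = t)
    (hTH : H.IsClique (T : Set U)) {T' : Finset V} (hT' : T'.card = t) (himg : T'.image β = T) :
    (blowUp H β W).IsClique (T' : Set V) ↔ T' ⊆ W := by
  refine ⟨fun hcl v hv => ?_, fun hW a ha b hb hab => ⟨hW ha, hW hb, ?_⟩⟩
  · obtain ⟨w, hw, hne⟩ := exists_mem_ne (by omega : 1 < T'.card) v
    exact (hcl hw hv hne).2.1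
  · have hinj : Set.InjOn β T' := injOn_of_card_image_eq (by rw [himg, hT, hT'])
    subst himg
    exact hTH (mem_coe.mpr (mem_image_of_mem β ha)) (mem_coe.mpr (mem_image_of_mem β hb))
      fun h => hab (hinj ha hb h)

section FracVal

variable {U V : Type} [Fintype U] [DecidableEq U] [Fintype V] [DecidableEq V]
  {S : Set ℝ} {t : ℕ} {c : ℕ → ℝ}

theorem pow_mul_fracVal_le_fracVal_blowUp (hS : Convex ℝ S) (h1 : (1 : ℝ) ∈ S) (ht : 2 ≤ t)
    (hc : ∀ i, 1 ≤ i → 0 ≤ c i) (H : SimpleGraph U) {β : V → U} {W : Finset V} {m : ℕ}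
    (hmpos : 0 < m) (hm : ∀ u, (W.filter fun v => β v = u).card = m) :
    (m : ℝ) ^ t * fracVal S t H c ≤ fracVal S t (blowUp H β W) c := by
  have hmt : (0 : ℝ) < (m : ℝ) ^ t := by positivity
  have hhoms := fracVal_le_of_homs (J := Unit) hS h1 (one_le_two.trans ht) hc H
    (fun _ => blowUp H β W) (fun _ => β) (fun _ _ _ h => h.2.2) hmt fun T hT hTH => by
      rw [← Nat.cast_pow, Nat.cast_inj, ← congrArg (m ^ ·) hT,
        ← card_filter_image_eq_of_card_fibre_eq hm T, hT]
      refine card_nbij' Prod.snd (Prod.mk ()) ?_ ?_ (fun _ _ => rfl) (fun _ _ => rfl)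
      · intro p hp
        rw [mem_coe, mem_filter, mem_liftPairs] at hp
        have hW := (isClique_blowUp_iff ht hT hTH hp.1.1 hp.1.2).mp hp.2
        exact mem_filter.mpr ⟨mem_powersetCard.mpr ⟨hW, hp.1.1⟩, hp.1.2⟩
      · intro T' hT'
        rw [mem_coe, mem_filter, mem_powersetCard] at hT'
        rw [mem_coe, mem_filter, mem_liftPairs]
        exact ⟨⟨hT'.1.2, hT'.2⟩,
          (isClique_blowUp_iff ht hT hTH hT'.1.2 hT'.2).mpr hT'.1.1⟩
  simp only [univ_unique, sum_singleton] at hhoms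
  rwa [← div_eq_inv_mul, le_div_iff₀' hmt] at hhoms

end FracVal

lemma exists_card_fibre_eq {U V : Type*} [Fintype U] [DecidableEq U] [Nonempty U] [Fintype V]
    {m : ℕ} (h : Fintype.card U * m ≤ Fintype.card V) :
    ∃ (β : V → U) (W : Finset V), ∀ u, (W.filter fun v => β v = u).card = m := by
  obtain ⟨e⟩ : Nonempty (U × Fin m ↪ V) :=
    Function.Embedding.nonempty_of_card_le (by simpa using h)
  refine ⟨Function.extend e Prod.fst fun _ => Classical.arbitrary U, univ.map e, fun u => ?_⟩
  have hfibre : (univ.filter fun p : U × Fin m => p.1 = u) = {u} ×ˢ univ := by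
    ext ⟨a, i⟩
    simp [eq_comm]
  simp only [filter_map, card_map, Function.comp_def, e.injective.extend_apply, hfibre,
    card_product, card_singleton, one_mul, card_univ, Fintype.card_fin]

lemma cast_div_sub_one_le (n s : ℕ) : (n : ℝ) / s - 1 ≤ (n / s : ℕ) := by
  rw [sub_le_iff_le_add, ← Nat.floor_div_eq_div (K := ℝ)]
  exact (Nat.lt_floor_add_one _).le

lemma sub_pow_le_choose_mul_factorial {s t : ℕ} (h : t ≤ s) :
    ((s : ℝ) - t) ^ t ≤ s.choose t * t.factorial := by
  rw [← div_le_iff₀ (by positivity)]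
  refine le_trans ?_ (Nat.pow_le_choose t s)
  have : ((s : ℝ) - t) ≤ (s + 1 - t : ℕ) := by
    rw [Nat.cast_sub (by omega)]
    push_cast
    linarith
  have : (0 : ℝ) ≤ (s : ℝ) - t := sub_nonneg.mpr (mod_cast h)
  gcongr

lemma one_sub_mul_pow_le_pow_mul_choose {t s n : ℕ} (ht : 1 ≤ t) (hts : t ≤ s) (hsn : s ≤ n) :
    (1 - t * ((s : ℝ) / n + t / s)) * ((n : ℝ) ^ t / t.factorial) ≤
      ((n / s : ℕ) : ℝ) ^ t * s.choose t := by
  have htR : (1 : ℝ) ≤ t := mod_cast ht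
  have hs : (0 : ℝ) < s := mod_cast ht.trans hts
  have hn : (0 : ℝ) < n := mod_cast (ht.trans hts).trans hsn
  have hst : (0 : ℝ) ≤ s - t := sub_nonneg.mpr (mod_cast hts)
  set x : ℝ := s / n + t / s with hx
  rcases lt_or_ge 1 (t * x) with hlt | hle
  · exact (mul_nonpos_of_nonpos_of_nonneg (by linarith) (by positivity)).trans (by positivity)
  have hx0 : 0 ≤ x := by positivity
  have hx1 : x ≤ 1 := (le_mul_of_one_le_left hx0 htR).trans hle
  have hbernoulli : 1 - t * x ≤ (1 - x) ^ t := by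
    have := one_add_mul_le_pow (a := -x) (by linarith) t
    rwa [mul_neg, ← sub_eq_add_neg, ← sub_eq_add_neg] at this
  have hexpand : (1 - x) * n ≤ ((n : ℝ) / s - 1) * (s - t) := by
    have : ((n : ℝ) / s - 1) * (s - t) = (1 - x) * n + t := by
      rw [hx]
      field_simp
      ring
    linarith
  rw [mul_div_assoc', div_le_iff₀ (by positivity)]
  calc (1 - t * x) * (n : ℝ) ^ t ≤ (1 - x) ^ t * (n : ℝ) ^ t := by gcongr
    _ = ((1 - x) * n) ^ t := (mul_pow _ _ _).symm
    _ ≤ (((n : ℝ) / s - 1) * (s - t)) ^ t :=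
        pow_le_pow_left₀ (mul_nonneg (sub_nonneg.mpr hx1) hn.le) hexpand t
    _ ≤ (((n / s : ℕ) : ℝ) * (s - t)) ^ t := by
        have : 0 ≤ (n : ℝ) / s - 1 := sub_nonneg.mpr ((one_le_div hs).mpr (mod_cast hsn))
        gcongr
        exact cast_div_sub_one_le n s
    _ = ((n / s : ℕ) : ℝ) ^ t * (s - t) ^ t := mul_pow _ _ _
    _ ≤ ((n / s : ℕ) : ℝ) ^ t * (s.choose t * t.factorial) := by
        gcongr
        exact sub_pow_le_choose_mul_factorial hts
    _ = _ := (mul_assoc _ _ _).symm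

theorem exists_blowUp {t s n : ℕ} {c : ℕ → ℝ} (ht : 2 ≤ t) (hc : ∀ i, 1 ≤ i → 0 ≤ c i)
    (hts : t ≤ s) (hsn : s ≤ n) (H : SimpleGraph (Fin s)) :
    ∃ Gt : SimpleGraph (Fin n), ∀ S : Set ℝ, Convex ℝ S → 1 ∈ S →
      (1 - t * ((s : ℝ) / n + t / s)) * ((n : ℝ) ^ t / t.factorial) * fracDensity S t H c ≤
        fracVal S t Gt c := by
  have hs : 0 < s := by omega
  have : NeZero s := ⟨hs.ne'⟩
  obtain ⟨β, W, hfibre⟩ := exists_card_fibre_eq (U := Fin s) (V := Fin n) (m := n / s)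
    (by simpa using Nat.mul_div_le n s)
  refine ⟨blowUp H β W, fun S hS h1 => ?_⟩
  have hC : (0 : ℝ) < s.choose t := mod_cast Nat.choose_pos hts
  calc (1 - t * ((s : ℝ) / n + t / s)) * ((n : ℝ) ^ t / t.factorial) * fracDensity S t H c
      ≤ ((n / s : ℕ) : ℝ) ^ t * s.choose t * fracDensity S t H c :=
        mul_le_mul_of_nonneg_right
          (one_sub_mul_pow_le_pow_mul_choose (one_le_two.trans ht) hts hsn)
          (fracDensity_nonneg H hc)
    _ = ((n / s : ℕ) : ℝ) ^ t * fracVal S t H c := by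
        rw [fracDensity, Fintype.card_fin, mul_assoc, mul_div_cancel₀ _ hC.ne']
    _ ≤ fracVal S t (blowUp H β W) c :=
        pow_mul_fracVal_le_fracVal_blowUp hS h1 ht hc H (Nat.div_pos hsn hs) hfibre

end BlowUp

/-! ### Concentration of block averages -/

section Concentration

variable {ι Ψ : Type*} [Fintype ι] [DecidableEq ι] [Fintype Ψ] [Nonempty Ψ]

lemma expect_eval (F : Ψ → ℝ) (j : ι) : 𝔼 Φ : ι → Ψ, F (Φ j) = 𝔼 ψ, F ψ := by
  rw [Fintype.expect_equiv (Equiv.funSplitAt j Ψ) (fun Φ => F (Φ j)) (fun p => F p.1) fun _ => rfl,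
    ← univ_product_univ, expect_product]
  simp only [Fintype.expect_const]

lemma expect_eval_mul_eval (F F' : Ψ → ℝ) {j k : ι} (hjk : k ≠ j) :
    𝔼 Φ : ι → Ψ, F (Φ j) * F' (Φ k) = (𝔼 ψ, F ψ) * 𝔼 ψ, F' ψ := by
  rw [Fintype.expect_equiv (Equiv.funSplitAt j Ψ) (fun Φ => F (Φ j) * F' (Φ k))
    (fun p => F p.1 * F' (p.2 ⟨k, hjk⟩)) fun _ => rfl, ← univ_product_univ, expect_product]
  simp only [← mul_expect, expect_eval F', expect_mul]

lemma expect_sq_sum_eval_le {y : Ψ → ℝ} {C : ℝ} (hy : 𝔼 ψ, y ψ = 0) (hyC : ∀ ψ, y ψ ^ 2 ≤ C) :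
    𝔼 Φ : ι → Ψ, (∑ j, y (Φ j)) ^ 2 ≤ Fintype.card ι * C := by
  have hcov : ∀ j k : ι, 𝔼 Φ : ι → Ψ, y (Φ j) * y (Φ k) = if j = k then 𝔼 ψ, y ψ ^ 2 else 0 := by
    intro j k
    split_ifs with h
    · simp only [h, ← sq, expect_eval fun ψ => y ψ ^ 2]
    · rw [expect_eval_mul_eval y y (Ne.symm h), hy, zero_mul]
  simp only [sq, sum_mul_sum, expect_sum_comm, hcov, sum_ite_eq, mem_univ, if_true, sum_const,
    card_univ, nsmul_eq_mul]
  gcongr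
  exact expect_le univ_nonempty fun ψ _ => (sq (y ψ)).symm.trans_le (hyC ψ)

lemma abs_le_add_sq_div (z : ℝ) {η : ℝ} (hη : 0 < η) : |z| ≤ η + z ^ 2 / η := by
  rw [← sub_le_iff_le_add', le_div_iff₀ hη]
  nlinarith [sq_abs z, sq_nonneg (|z| - η), abs_nonneg z]

lemma expect_abs_expect_eval_sub_le [Nonempty ι] {x : Ψ → ℝ} {C η : ℝ} (hx0 : ∀ ψ, 0 ≤ x ψ)
    (hxC : ∀ ψ, x ψ ≤ C) (hη : 0 < η) :
    𝔼 Φ : ι → Ψ, |𝔼 j, x (Φ j) - 𝔼 ψ, x ψ| ≤ η + C ^ 2 / (Fintype.card ι * η) := by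
  set a : ℝ := 𝔼 ψ, x ψ
  have ha0 : 0 ≤ a := expect_nonneg fun ψ _ => hx0 ψ
  have haC : a ≤ C := expect_le univ_nonempty fun ψ _ => hxC ψ
  have hvar : 𝔼 Φ : ι → Ψ, (∑ j, (x (Φ j) - a)) ^ 2 ≤ Fintype.card ι * C ^ 2 := by
    refine expect_sq_sum_eval_le (y := fun ψ => x ψ - a) ?_ fun ψ => ?_
    · rw [expect_sub_distrib, Fintype.expect_const, sub_self]
    · exact sq_le_sq' (by linarith [hx0 ψ]) (by linarith [hxC ψ])
  have hpt : ∀ Φ : ι → Ψ, |𝔼 j, x (Φ j) - a| ≤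
      η + (∑ j, (x (Φ j) - a)) ^ 2 / (Fintype.card ι ^ 2 * η) := by
    intro Φ
    have hcentre : 𝔼 j, x (Φ j) - a = (∑ j, (x (Φ j) - a)) / Fintype.card ι := by
      rw [← Fintype.expect_eq_sum_div_card, expect_sub_distrib, Fintype.expect_const]
    rw [hcentre, ← div_div, ← div_pow]
    exact abs_le_add_sq_div _ hη
  calc 𝔼 Φ : ι → Ψ, |𝔼 j, x (Φ j) - a|
      ≤ 𝔼 Φ : ι → Ψ, (η + (∑ j, (x (Φ j) - a)) ^ 2 / (Fintype.card ι ^ 2 * η)) :=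
        expect_le_expect fun Φ _ => hpt Φ
    _ = η + (𝔼 Φ : ι → Ψ, (∑ j, (x (Φ j) - a)) ^ 2) / (Fintype.card ι ^ 2 * η) := by
        rw [expect_add_distrib, Fintype.expect_const, expect_div]
    _ ≤ η + Fintype.card ι * C ^ 2 / (Fintype.card ι ^ 2 * η) := by gcongr
    _ = η + C ^ 2 / (Fintype.card ι * η) := by field_simp

end Concentration

section Rearrangement

variable {Ω P : Type*} [Fintype Ω] [Fintype P] [Nonempty P] {act : P → Equiv.Perm Ω}

lemma expect_expect_perm (act : P → Equiv.Perm Ω) (F : Ω → ℝ) :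
    𝔼 ω, 𝔼 p, F (act p ω) = 𝔼 ω, F ω := by
  rw [expect_comm]
  simp only [Fintype.expect_equiv (act _) _ F fun _ => rfl, Fintype.expect_const]

lemma expect_le_of_le_expect_perm {x B : Ω → ℝ} (hxB : ∀ ω, x ω ≤ 𝔼 p, B (act p ω)) :
    𝔼 ω, x ω ≤ 𝔼 ω, B ω :=
  (expect_le_expect fun ω _ => hxB ω).trans_eq (expect_expect_perm act B)

variable [Nonempty Ω]

lemma expect_max_expect_sub_eq (x : Ω → ℝ) :
    𝔼 ω, max (𝔼 ω', x ω' - x ω) 0 = 𝔼 ω, max (x ω - 𝔼 ω', x ω') 0 := by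
  set a : ℝ := 𝔼 ω, x ω
  have hsub : ∀ ω, max (a - x ω) 0 - max (x ω - a) 0 = a - x ω := fun ω => by
    rw [← neg_sub a (x ω), max_zero_sub_eq_self]
  rw [← sub_eq_zero, ← expect_sub_distrib, expect_congr rfl fun ω _ => hsub ω, expect_sub_distrib,
    Fintype.expect_const, sub_self]

/-- A function dominated by averages of rearrangements of `B` rarely exceeds its mean by much when
`B` is concentrated and has nearly the same mean; hence it is also rarely far below its mean. -/
lemma expect_max_expect_sub_le {x B : Ω → ℝ} (hxB : ∀ ω, x ω ≤ 𝔼 p, B (act p ω)) :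
    𝔼 ω, max (𝔼 ω', x ω' - x ω) 0 ≤
      (𝔼 ω, B ω - 𝔼 ω, x ω) + 𝔼 ω, |B ω - 𝔼 ω', B ω'| := by
  have hmean := expect_le_of_le_expect_perm hxB
  rw [expect_max_expect_sub_eq]
  set a : ℝ := 𝔼 ω, x ω
  set b : ℝ := 𝔼 ω, B ω
  have hpt : ∀ ω, max (x ω - a) 0 ≤ 𝔼 p, max (B (act p ω) - a) 0 := fun ω => by
    refine max_le ?_ (expect_nonneg fun p _ => le_max_right _ _)
    calc x ω - a ≤ 𝔼 p, (B (act p ω) - a) := by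
          rw [expect_sub_distrib, Fintype.expect_const]
          exact sub_le_sub_right (hxB ω) a
      _ ≤ _ := expect_le_expect fun p _ => le_max_left _ _
  calc 𝔼 ω, max (x ω - a) 0 ≤ 𝔼 ω, 𝔼 p, max (B (act p ω) - a) 0 :=
        expect_le_expect fun ω _ => hpt ω
    _ = 𝔼 ω, max (B ω - a) 0 := expect_expect_perm act fun ω => max (B ω - a) 0
    _ ≤ 𝔼 ω, ((b - a) + |B ω - b|) := by
        refine expect_le_expect fun ω _ => max_le ?_ ?_
        · linarith [le_abs_self (B ω - b)]
        · linarith [abs_nonneg (B ω - b)]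
    _ = _ := by rw [expect_add_distrib, Fintype.expect_const]

end Rearrangement

section AverageDensity

/-- Splitting a map on `m * s` points into `m` blocks of `s` points. -/
def blockEquiv (V : Type*) (m s : ℕ) : (Fin (m * s) → V) ≃ (Fin m → Fin s → V) :=
  (Equiv.arrowCongr finProdFinEquiv.symm (Equiv.refl V)).trans (Equiv.curry _ _ _)

variable {V : Type} {S : Set ℝ} {t : ℕ} {c : ℕ → ℝ}

/-- The mean density of the pullbacks of `G` along the first, …, `m`-th block of `ψ`. -/
noncomputable def blockDensity (S : Set ℝ) (t : ℕ) (c : ℕ → ℝ) (G : SimpleGraph V) {m s : ℕ}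
    (ψ : Fin (m * s) → V) : ℝ :=
  𝔼 j, fracDensity S t (G.comap (blockEquiv V m s ψ j)) c

lemma fracDensity_comap_le_expect_blockDensity (hS : Convex ℝ S) (h1 : (1 : ℝ) ∈ S) (ht : 1 ≤ t)
    (hc : ∀ i, 1 ≤ i → 0 ≤ c i) {m s : ℕ} (hs : t ≤ s) [NeZero m] (G : SimpleGraph V)
    (ψ : Fin (m * s) → V) :
    fracDensity S t (G.comap ψ) c ≤
      𝔼 σ : Equiv.Perm (Fin (m * s)), blockDensity S t c G (ψ ∘ σ) := by
  let φ : Equiv.Perm (Fin (m * s)) × Fin m → Fin s → Fin (m * s) :=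
    fun p i => p.1 (finProdFinEquiv (p.2, i))
  have hsymm : IsSymmFamily φ := fun τ =>
    ⟨(Equiv.mulLeft τ).prodCongr (Equiv.refl _), fun _ => rfl⟩
  have hφ : ∀ p, Function.Injective (φ p) := fun p i i' h => by simpa [φ] using h
  refine (hsymm.fracDensity_le_average hφ hS h1 ht hc (by simpa using hs) (G.comap ψ)).trans_eq ?_
  rw [← univ_product_univ, expect_product]
  rfl

variable [Fintype V]

/-- The mean density of the pullback of `G` along a uniformly random map `Fin s → V`. -/
noncomputable def avgDensity (S : Set ℝ) (t : ℕ) (c : ℕ → ℝ) (G : SimpleGraph V) (s : ℕ) : ℝ :=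
  𝔼 ψ : Fin s → V, fracDensity S t (G.comap ψ) c

lemma avgDensity_nonneg (G : SimpleGraph V) (hc : ∀ i, 1 ≤ i → 0 ≤ c i) (s : ℕ) :
    0 ≤ avgDensity S t c G s :=
  expect_nonneg fun _ _ => fracDensity_nonneg _ hc

variable [Nonempty V]

lemma avgDensity_le (h1 : (1 : ℝ) ∈ S) (ht : 1 ≤ t) (G : SimpleGraph V)
    (hc : ∀ i, 1 ≤ i → 0 ≤ c i) (s : ℕ) : avgDensity S t c G s ≤ c t :=
  expect_le univ_nonempty fun _ _ => fracDensity_le h1 ht _ hc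

lemma expect_blockDensity (G : SimpleGraph V) (m s : ℕ) [NeZero m] :
    𝔼 ψ : Fin (m * s) → V, blockDensity S t c G ψ = avgDensity S t c G s := by
  rw [Fintype.expect_equiv (blockEquiv V m s) (blockDensity S t c G)
    (fun Φ => 𝔼 j, fracDensity S t (G.comap (Φ j)) c) fun _ => rfl, expect_comm]
  simp only [expect_eval fun ψ => fracDensity S t (G.comap ψ) c, Fintype.expect_const, avgDensity]

lemma expect_abs_blockDensity_sub_le (h1 : (1 : ℝ) ∈ S) (ht : 1 ≤ t)
    (hc : ∀ i, 1 ≤ i → 0 ≤ c i) (m s : ℕ) [NeZero m] (G : SimpleGraph V) {η : ℝ} (hη : 0 < η) :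
    𝔼 ψ : Fin (m * s) → V, |blockDensity S t c G ψ - avgDensity S t c G s| ≤
      η + c t ^ 2 / (m * η) := by
  rw [Fintype.expect_equiv (blockEquiv V m s)
    (fun ψ => |blockDensity S t c G ψ - avgDensity S t c G s|)
    (fun Φ => |𝔼 j, fracDensity S t (G.comap (Φ j)) c - avgDensity S t c G s|) fun _ => rfl]
  simpa only [Fintype.card_fin, avgDensity] using expect_abs_expect_eval_sub_le (ι := Fin m)
    (x := fun ψ : Fin s → V => fracDensity S t (G.comap ψ) c)
    (fun ψ => fracDensity_nonneg _ hc) (fun ψ => fracDensity_le h1 ht _ hc) hη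

theorem expect_max_avgDensity_sub_le (hS : Convex ℝ S) (h1 : (1 : ℝ) ∈ S) (ht : 1 ≤ t)
    (hc : ∀ i, 1 ≤ i → 0 ≤ c i) {m s : ℕ} (hs : t ≤ s) [NeZero m] (G : SimpleGraph V)
    {η : ℝ} (hη : 0 < η) :
    𝔼 ψ : Fin (m * s) → V, max (avgDensity S t c G (m * s) - fracDensity S t (G.comap ψ) c) 0 ≤
      avgDensity S t c G s - avgDensity S t c G (m * s) + (η + c t ^ 2 / (m * η)) := by
  have h := expect_max_expect_sub_le (P := Equiv.Perm (Fin (m * s)))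
    (act := fun σ => Equiv.arrowCongr σ.symm (Equiv.refl V)) (B := blockDensity S t c G)
    (fracDensity_comap_le_expect_blockDensity hS h1 ht hc hs G)
  rw [expect_blockDensity] at h
  exact h.trans (add_le_add_right (expect_abs_blockDensity_sub_le h1 ht hc m s G hη) _)

/-- At one of boundedly many scales both mean densities drop little, and there some pullback has
both densities close to their means. -/
theorem exists_avgDensity_sub_le_fracDensity {S₁ S₂ : Set ℝ} (hS₁ : Convex ℝ S₁)
    (h₁ : (1 : ℝ) ∈ S₁) (hS₂ : Convex ℝ S₂) (h₂ : (1 : ℝ) ∈ S₂) (ht : 1 ≤ t)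
    (hc : ∀ i, 1 ≤ i → 0 ≤ c i) {s₀ m R : ℕ} (hs : t ≤ s₀) (hm : 0 < m) (hR : 0 < R) {η ε : ℝ}
    (hη : 0 < η) (hε : 2 * c t / R + 2 * (η + c t ^ 2 / (m * η)) ≤ ε) (G : SimpleGraph V) :
    ∃ j < R, ∃ ψ : Fin (m ^ (j + 1) * s₀) → V,
      avgDensity S₁ t c G (m ^ (j + 1) * s₀) - ε ≤ fracDensity S₁ t (G.comap ψ) c ∧
      avgDensity S₂ t c G (m ^ (j + 1) * s₀) - ε ≤ fracDensity S₂ t (G.comap ψ) c := by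
  have : NeZero m := ⟨hm.ne'⟩
  set u : ℕ → ℝ := fun j => avgDensity S₁ t c G (m ^ j * s₀) + avgDensity S₂ t c G (m ^ j * s₀)
    with hu
  obtain ⟨j, hj, hdrop⟩ : ∃ j ∈ range R, u j - u (j + 1) ≤ 2 * c t / R := by
    refine exists_le_of_expect_le (s := range R) (nonempty_range_iff.mpr hR.ne') ?_
    rw [expect_eq_sum_div_card, sum_range_sub', card_range]
    have h0 : u 0 ≤ 2 * c t := two_mul (c t) ▸
      add_le_add (avgDensity_le h₁ ht G hc _) (avgDensity_le h₂ ht G hc _)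
    have hend : 0 ≤ u R := add_nonneg (avgDensity_nonneg G hc _) (avgDensity_nonneg G hc _)
    gcongr
    linarith
  refine ⟨j, mem_range.mp hj, ?_⟩
  have hsj : t ≤ m ^ j * s₀ := hs.trans (Nat.le_mul_of_pos_left _ (pow_pos hm j))
  have hscale : m ^ (j + 1) * s₀ = m * (m ^ j * s₀) := by rw [pow_succ', mul_assoc]
  simp only [hu, hscale] at hdrop
  rw [hscale]
  have hdev₁ := expect_max_avgDensity_sub_le (m := m) hS₁ h₁ ht hc hsj G hη
  have hdev₂ := expect_max_avgDensity_sub_le (m := m) hS₂ h₂ ht hc hsj G hη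
  obtain ⟨ψ, -, hψ⟩ := exists_le_of_expect_le univ_nonempty
    ((expect_add_distrib univ _ _).trans_le (add_le_add hdev₁ hdev₂))
  refine ⟨ψ, ?_, ?_⟩
  · linarith [le_max_left (avgDensity S₁ t c G (m * (m ^ j * s₀)) -
        fracDensity S₁ t (G.comap ψ) c) 0,
      le_max_right (avgDensity S₂ t c G (m * (m ^ j * s₀)) - fracDensity S₂ t (G.comap ψ) c) 0]
  · linarith [le_max_right (avgDensity S₁ t c G (m * (m ^ j * s₀)) -
        fracDensity S₁ t (G.comap ψ) c) 0,
      le_max_left (avgDensity S₂ t c G (m * (m ^ j * s₀)) - fracDensity S₂ t (G.comap ψ) c) 0]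

end AverageDensity

/-! ### Thinning fractional weightings -/

section SubsetWeight

variable {ι : Type*} [DecidableEq ι] {p : ι → ℝ} {P E : Finset ι}

/-- The probability that `E` is the random subset of `P` containing each `i ∈ P` independently with
probability `p i`. -/
noncomputable def subsetWeight (p : ι → ℝ) (P E : Finset ι) : ℝ :=
  (∏ i ∈ E, p i) * ∏ i ∈ P \ E, (1 - p i)

lemma subsetWeight_nonneg (hp : ∀ i ∈ P, p i ∈ Set.Icc 0 1) (hE : E ⊆ P) :
    0 ≤ subsetWeight p P E :=
  mul_nonneg (prod_nonneg fun i hi => (hp i (hE hi)).1)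
    (prod_nonneg fun i hi => sub_nonneg.mpr (hp i (mem_sdiff.mp hi).1).2)

lemma sum_powerset_subsetWeight (p : ι → ℝ) (P : Finset ι) :
    ∑ E ∈ P.powerset, subsetWeight p P E = 1 := by
  simp only [subsetWeight, ← prod_add, add_sub_cancel, prod_const_one]

lemma sum_powerset_ite_mem_subsetWeight (p : ι → ℝ) {a : ι} (ha : a ∈ P) :
    ∑ E ∈ P.powerset, (if a ∈ E then subsetWeight p P E else 0) = p a := by
  -- Expand `∏ i ∈ P, (p i + q i)`, where `q` is `1 - p` except that `q a = 0`.
  have hprod : ∏ i ∈ P, (p i + if i = a then 0 else 1 - p i) = p a := by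
    rw [prod_eq_single_of_mem a ha fun b _ hb => by rw [if_neg hb, add_sub_cancel], if_pos rfl,
      add_zero]
  rw [← hprod, prod_add]
  refine sum_congr rfl fun E _ => ?_
  split_ifs with haE
  · refine congrArg _ (prod_congr rfl fun i hi => ?_)
    rw [if_neg fun h : i = a => (mem_sdiff.mp hi).2 (h ▸ haE)]
  · have hzero : ∏ i ∈ P \ E, (if i = a then 0 else 1 - p i) = 0 :=
      prod_eq_zero (mem_sdiff.mpr ⟨ha, haE⟩) (if_pos rfl)
    rw [hzero, mul_zero]

lemma eq_of_subsetWeight_ne_zero (hp : ∀ i ∈ P, p i = 1) (hE : E ⊆ P)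
    (h : subsetWeight p P E ≠ 0) : E = P := by
  refine hE.antisymm fun i hi => ?_
  by_contra hiE
  exact h (mul_eq_zero_of_right _
    (prod_eq_zero (mem_sdiff.mpr ⟨hi, hiE⟩) (sub_eq_zero.mpr (hp i hi).symm)))

end SubsetWeight

section Thinning

variable {U : Type} [Fintype U] [DecidableEq U]

/-- A weighting of pairs `(K, E)`, where `E` is a nonempty set of `t`-subsets of the clique `K`
that `K` is responsible for, giving total weight one to each `t`-clique. -/
structure IsThinned (t : ℕ) (H : SimpleGraph U)
    (g : Finset U × Finset (Finset U) → ℝ) : Prop where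
  nonneg : ∀ p, 0 ≤ g p
  isClique : ∀ p, g p ≠ 0 → IsCliqueOf H p.1
  nonempty : ∀ p, g p ≠ 0 → p.2.Nonempty
  subset : ∀ p, g p ≠ 0 → p.2 ⊆ powersetCard t p.1
  degree : ∀ T : Finset U, T.card = t → H.IsClique (T : Set U) →
    ∑ p, (if T ∈ p.2 then g p else 0) = 1

/-- The total weight of the sets containing `T`. -/
def coverage (f : Finset U → ℝ) (T : Finset U) : ℝ :=
  ∑ K ∈ univ.filter (fun K => T ⊆ K), f K

/-- Each clique `K` of the weighting `f` is made responsible for a random set of its `t`-subsets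
`T`, each chosen independently with probability the inverse of its coverage. -/
noncomputable def thinning (t : ℕ) (f : Finset U → ℝ) (p : Finset U × Finset (Finset U)) : ℝ :=
  if p.2.Nonempty ∧ p.2 ⊆ powersetCard t p.1 then
    f p.1 * subsetWeight (fun T => (coverage f T)⁻¹) (powersetCard t p.1) p.2
  else 0

variable {S : Set ℝ} {t : ℕ} {c : ℕ → ℝ} {H : SimpleGraph U} {f : Finset U → ℝ}

lemma thinning_ne_zero {p : Finset U × Finset (Finset U)} (h : thinning t f p ≠ 0) :
    (p.2.Nonempty ∧ p.2 ⊆ powersetCard t p.1) ∧ f p.1 ≠ 0 ∧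
      subsetWeight (fun T => (coverage f T)⁻¹) (powersetCard t p.1) p.2 ≠ 0 := by
  rw [thinning, ne_eq, ite_eq_right_iff, Classical.not_imp] at h
  exact ⟨h.1, mul_ne_zero_iff.mp h.2⟩

lemma sum_ite_mem_thinning (f : Finset U → ℝ) {T : Finset U} (hT : T.card = t) (K : Finset U) :
    ∑ E, (if T ∈ E then thinning t f (K, E) else 0) =
      if T ⊆ K then f K * (coverage f T)⁻¹ else 0 := by
  split_ifs with hTK
  · have hTP : T ∈ powersetCard t K := mem_powersetCard.mpr ⟨hTK, hT⟩
    rw [← sum_powerset_ite_mem_subsetWeight (fun T => (coverage f T)⁻¹) hTP, mul_sum,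
      ← sum_subset (subset_univ (powersetCard t K).powerset)]
    · refine sum_congr rfl fun E hE => ?_
      split_ifs with hTE
      · exact if_pos ⟨⟨T, hTE⟩, mem_powerset.mp hE⟩
      · rw [mul_zero]
    · intro E _ hE
      have hzero : thinning t f (K, E) = 0 := if_neg fun h => hE (mem_powerset.mpr h.2)
      rw [hzero, ite_self]
  · refine sum_eq_zero fun E _ => ?_
    split_ifs with hTE
    · exact if_neg fun h => hTK (mem_powersetCard.mp (h.2 hTE)).1
    · rfl

namespace IsFracWeighting

lemma inv_coverage_mem_Icc (hf : IsFracWeighting S t H f) (hS : S ⊆ Set.Ici 1) {T : Finset U}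
    (hT : T.card = t) : (coverage f T)⁻¹ ∈ Set.Icc 0 1 := by
  by_cases hTH : H.IsClique (T : Set U)
  · have hcov : 1 ≤ coverage f T := hS (hf.2.2 T hT hTH)
    exact ⟨inv_nonneg.mpr (zero_le_one.trans hcov), inv_le_one_of_one_le₀ hcov⟩
  · have hcov : coverage f T = 0 := sum_eq_zero fun K hK => hf.2.1 K fun hKH =>
      hTH (hKH.2.subset (coe_subset.mpr (mem_filter.mp hK).2))
    simp [hcov]

lemma subsetWeight_inv_coverage_nonneg (hf : IsFracWeighting S t H f) (hS : S ⊆ Set.Ici 1)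
    {K : Finset U} {E : Finset (Finset U)} (hE : E ⊆ powersetCard t K) :
    0 ≤ subsetWeight (fun T => (coverage f T)⁻¹) (powersetCard t K) E :=
  subsetWeight_nonneg (fun _ hT => hf.inv_coverage_mem_Icc hS (mem_powersetCard.mp hT).2) hE

theorem isThinned_thinning (hf : IsFracWeighting S t H f) (hS : S ⊆ Set.Ici 1) :
    IsThinned t H (thinning t f) where
  nonneg p := by
    unfold thinning
    split_ifs with h
    · exact mul_nonneg (hf.1 _) (hf.subsetWeight_inv_coverage_nonneg hS h.2)
    · exact le_rfl
  isClique p hp := not_imp_comm.mp (hf.2.1 p.1) (thinning_ne_zero hp).2.1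
  nonempty p hp := (thinning_ne_zero hp).1.1
  subset p hp := (thinning_ne_zero hp).1.2
  degree T hT hTH := by
    have hcov : 1 ≤ coverage f T := hS (hf.2.2 T hT hTH)
    rw [Fintype.sum_prod_type, sum_congr rfl fun K _ => sum_ite_mem_thinning f hT K, ← sum_filter,
      ← sum_mul]
    exact mul_inv_cancel₀ (zero_lt_one.trans_le hcov).ne'

lemma sum_thinning_le (hf : IsFracWeighting S t H f) (hS : S ⊆ Set.Ici 1) (K : Finset U) :
    ∑ E, thinning t f (K, E) ≤ f K := by
  calc ∑ E, thinning t f (K, E) = ∑ E ∈ (powersetCard t K).powerset, thinning t f (K, E) :=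
        (sum_subset (subset_univ _) fun E _ hE =>
          if_neg fun h => hE (mem_powerset.mpr h.2)).symm
    _ ≤ ∑ E ∈ (powersetCard t K).powerset,
          f K * subsetWeight (fun T => (coverage f T)⁻¹) (powersetCard t K) E := by
        refine sum_le_sum fun E hE => ?_
        unfold thinning
        split_ifs
        · exact le_rfl
        · exact mul_nonneg (hf.1 K)
            (hf.subsetWeight_inv_coverage_nonneg hS (mem_powerset.mp hE))
    _ = f K := by rw [← mul_sum, sum_powerset_subsetWeight, mul_one]

theorem sum_cost_thinning_le (hf : IsFracWeighting S t H f) (hS : S ⊆ Set.Ici 1)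
    (hc : ∀ i, 1 ≤ i → 0 ≤ c i) :
    ∑ p : Finset U × Finset (Finset U), c p.1.card * thinning t f p ≤ cliqueCost c f := by
  rw [Fintype.sum_prod_type]
  refine sum_le_sum fun K _ => ?_
  dsimp only
  rw [← mul_sum]
  rcases K.eq_empty_or_nonempty with rfl | hK
  · have hf0 : f ∅ = 0 := hf.2.1 ∅ fun h => not_nonempty_empty h.1
    simp [thinning, hf0]
  · exact mul_le_mul_of_nonneg_left (hf.sum_thinning_le hS K) (hc _ hK.card_pos)

lemma eq_powersetCard_of_thinning_ne_zero (hf : IsFracWeighting {1} t H f)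
    {p : Finset U × Finset (Finset U)} (hp : thinning t f p ≠ 0) : p.2 = powersetCard t p.1 := by
  obtain ⟨⟨-, hsub⟩, hfp, hweight⟩ := thinning_ne_zero hp
  have hclique : IsCliqueOf H p.1 := not_imp_comm.mp (hf.2.1 p.1) hfp
  refine eq_of_subsetWeight_ne_zero (fun T hT => ?_) hsub hweight
  obtain ⟨hTK, hTt⟩ := mem_powersetCard.mp hT
  have hcov : coverage f T = 1 := hf.2.2 T hTt (hclique.2.subset (coe_subset.mpr hTK))
  rw [hcov, inv_one]

end IsFracWeighting

end Thinning

/-! ### Integer weightings from matchings -/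

section IntegerWeightings

variable {V : Type} [Fintype V] [DecidableEq V] {S : Set ℝ} {t : ℕ} {c : ℕ → ℝ}
  {G : SimpleGraph V} {A : Finset (Finset V)}

lemma cliqueCost_indicator (c : ℕ → ℝ) (A : Finset (Finset V)) :
    cliqueCost c (fun K => if K ∈ A then 1 else 0) = ∑ K ∈ A, c K.card := by
  simp [cliqueCost]

lemma isFracWeighting_indicator (hA : ∀ K ∈ A, IsCliqueOf G K)
    (hdeg : ∀ T : Finset V, T.card = t → G.IsClique (T : Set V) →
      ((A.filter fun K => T ⊆ K).card : ℝ) ∈ S) :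
    IsFracWeighting S t G fun K => if K ∈ A then 1 else 0 := by
  refine ⟨fun K => ?_, fun K hK => if_neg fun h => hK (hA K h), fun T hT hTG => ?_⟩
  · dsimp only
    split_ifs <;> norm_num
  · convert hdeg T hT hTG
    rw [sum_boole, filter_filter]
    congr 2
    ext K
    simp [and_comm]

lemma thetaInt_le_sum (hc : ∀ i, 1 ≤ i → 0 ≤ c i) (hA : ∀ K ∈ A, IsCliqueOf G K)
    (hcov : ∀ T : Finset V, T.card = t → G.IsClique (T : Set V) → ∃ K ∈ A, T ⊆ K) :
    thetaInt t G c ≤ ∑ K ∈ A, c K.card := by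
  rw [← cliqueCost_indicator]
  refine csInf_le ⟨0, ?_⟩ ⟨_, ⟨isFracWeighting_indicator (S := Set.Ici 1) hA fun T hT hTG => ?_,
    fun K => (ite_eq_or_eq ..).symm⟩, rfl⟩
  · rintro x ⟨f, hf, rfl⟩
    exact IsFracWeighting.cliqueCost_nonneg (S := Set.Ici 1) hf.1 hc
  · obtain ⟨K, hK⟩ := hcov T hT hTG
    exact Set.mem_Ici.mpr (Nat.one_le_cast.mpr (card_pos.mpr ⟨K, mem_filter.mpr hK⟩))

lemma piInt_le_sum (hc : ∀ i, 1 ≤ i → 0 ≤ c i) (hA : ∀ K ∈ A, IsCliqueOf G K)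
    (hcov : ∀ T : Finset V, T.card = t → G.IsClique (T : Set V) → ∃! K, K ∈ A ∧ T ⊆ K) :
    piInt t G c ≤ ∑ K ∈ A, c K.card := by
  rw [← cliqueCost_indicator]
  refine csInf_le ⟨0, ?_⟩ ⟨_, ⟨isFracWeighting_indicator (S := {1}) hA fun T hT hTG => ?_,
    fun K => (ite_eq_or_eq ..).symm⟩, rfl⟩
  · rintro x ⟨f, hf, rfl⟩
    exact IsFracWeighting.cliqueCost_nonneg (S := {1}) hf.1 hc
  · obtain ⟨K, hK, huniq⟩ := hcov T hT hTG
    refine Set.mem_singleton_iff.mpr (Nat.cast_eq_one.mpr (card_eq_one.mpr ⟨K, ?_⟩))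
    exact eq_singleton_iff_unique_mem.mpr
      ⟨mem_filter.mpr hK, fun K' hK' => huniq K' (mem_filter.mp hK')⟩

end IntegerWeightings

section Matchings

variable {V I : Type*} [Fintype V] [DecidableEq V] {t : ℕ} {G : SimpleGraph V}

/-- The `t`-cliques of `G`. -/
noncomputable def cliqueSets (t : ℕ) (G : SimpleGraph V) : Finset (Finset V) :=
  univ.filter fun T => T.card = t ∧ G.IsClique (T : Set V)

lemma mem_cliqueSets {T : Finset V} :
    T ∈ cliqueSets t G ↔ T.card = t ∧ G.IsClique (T : Set V) := by
  simp [cliqueSets]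

lemma card_cliqueSets_le (t : ℕ) (G : SimpleGraph V) :
    (cliqueSets t G).card ≤ (Fintype.card V).choose t := by
  rw [← card_univ, ← card_powersetCard]
  exact card_le_card fun T hT => mem_powersetCard_univ.mpr (mem_cliqueSets.mp hT).1

/-- The cliques `k i` selected by `M`, together with the `t`-cliques outside all the sets `e i` of
`t`-cliques that these are responsible for. -/
noncomputable def chosenCliques (t : ℕ) (G : SimpleGraph V) (k : I → Finset V)
    (e : I → Finset (Finset V)) (M : Finset I) : Finset (Finset V) :=
  M.image k ∪ (cliqueSets t G \ M.biUnion e)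

variable {k : I → Finset V} {e : I → Finset (Finset V)} {M : Finset I}

lemma exists_mem_chosenCliques_superset (he : ∀ i ∈ M, ∀ T ∈ e i, T ⊆ k i) {T : Finset V}
    (hT : T ∈ cliqueSets t G) : ∃ K ∈ chosenCliques t G k e M, T ⊆ K := by
  by_cases hTM : T ∈ M.biUnion e
  · obtain ⟨i, hi, hTi⟩ := mem_biUnion.mp hTM
    exact ⟨k i, mem_union_left _ (mem_image_of_mem k hi), he i hi T hTi⟩
  · exact ⟨T, mem_union_right _ (mem_sdiff.mpr ⟨hT, hTM⟩), Subset.rfl⟩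

lemma existsUnique_mem_chosenCliques_superset
    (he : ∀ i ∈ M, ∀ T : Finset V, T.card = t → (T ∈ e i ↔ T ⊆ k i))
    (hM : (M : Set I).PairwiseDisjoint e) {T : Finset V} (hT : T ∈ cliqueSets t G) :
    ∃! K, K ∈ chosenCliques t G k e M ∧ T ⊆ K := by
  have hTt : T.card = t := (mem_cliqueSets.mp hT).1
  have heq : ∀ K ∈ cliqueSets t G \ M.biUnion e, T ⊆ K → K = T := fun K hK hTK =>
    (eq_of_subset_of_card_le hTK
      ((mem_cliqueSets.mp (mem_sdiff.mp hK).1).1.trans hTt.symm).le).symm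
  by_cases hTM : T ∈ M.biUnion e
  · obtain ⟨i, hi, hTi⟩ := mem_biUnion.mp hTM
    refine ⟨k i, ⟨mem_union_left _ (mem_image_of_mem k hi), (he i hi T hTt).mp hTi⟩, ?_⟩
    rintro K ⟨hK, hTK⟩
    rcases mem_union.mp hK with hK | hK
    · obtain ⟨j, hj, rfl⟩ := mem_image.mp hK
      by_contra hne
      exact disjoint_left.mp (hM hi hj fun hij => hne (hij ▸ rfl)) hTi ((he j hj T hTt).mpr hTK)
    · exact absurd hTM (heq K hK hTK ▸ (mem_sdiff.mp hK).2)
  · refine ⟨T, ⟨mem_union_right _ (mem_sdiff.mpr ⟨hT, hTM⟩), Subset.rfl⟩, ?_⟩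
    rintro K ⟨hK, hTK⟩
    rcases mem_union.mp hK with hK | hK
    · obtain ⟨j, hj, rfl⟩ := mem_image.mp hK
      exact absurd (mem_biUnion.mpr ⟨j, hj, (he j hj T hTt).mpr hTK⟩) hTM
    · exact heq K hK hTK

end Matchings

section IntegerBounds

variable {V I : Type} [Fintype V] [DecidableEq V] {t : ℕ} {c : ℕ → ℝ} {G : SimpleGraph V}
  {k : I → Finset V} {e : I → Finset (Finset V)} {M : Finset I}

lemma isCliqueOf_of_mem_chosenCliques (ht : 1 ≤ t) (hk : ∀ i ∈ M, IsCliqueOf G (k i)) :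
    ∀ K ∈ chosenCliques t G k e M, IsCliqueOf G K := by
  intro K hK
  rcases mem_union.mp hK with hK | hK
  · obtain ⟨i, hi, rfl⟩ := mem_image.mp hK
    exact hk i hi
  · obtain ⟨hKt, hKG⟩ := mem_cliqueSets.mp (mem_sdiff.mp hK).1
    exact ⟨card_pos.mp (hKt ▸ ht), hKG⟩

lemma sum_chosenCliques_le (hc : ∀ i, 1 ≤ i → 0 ≤ c i) (hk : ∀ i ∈ M, IsCliqueOf G (k i)) :
    ∑ K ∈ chosenCliques t G k e M, c K.card ≤
      ∑ i ∈ M, c (k i).card + c t * (cliqueSets t G \ M.biUnion e).card := by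
  have himage : ∀ K ∈ M.image k, 0 ≤ c K.card := fun K hK => by
    obtain ⟨i, hi, rfl⟩ := mem_image.mp hK
    exact hc _ (hk i hi).1.card_pos
  have hrest : ∑ K ∈ cliqueSets t G \ M.biUnion e, c K.card =
      c t * (cliqueSets t G \ M.biUnion e).card := by
    rw [sum_congr rfl fun K hK => congrArg c (mem_cliqueSets.mp (mem_sdiff.mp hK).1).1, sum_const,
      nsmul_eq_mul, mul_comm]
  rw [← hrest]
  calc ∑ K ∈ chosenCliques t G k e M, c K.card
      ≤ ∑ K ∈ M.image k, c K.card + ∑ K ∈ cliqueSets t G \ M.biUnion e, c K.card := by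
        rw [← sum_union_inter]
        exact le_add_of_nonneg_right (sum_nonneg fun K hK => himage K (mem_inter.mp hK).1)
    _ ≤ _ := add_le_add_left (sum_image_le_of_nonneg (f := fun K : Finset V => c K.card) himage) _

theorem thetaInt_le_of_matching (ht : 1 ≤ t) (hc : ∀ i, 1 ≤ i → 0 ≤ c i)
    (hk : ∀ i ∈ M, IsCliqueOf G (k i)) (he : ∀ i ∈ M, ∀ T ∈ e i, T ⊆ k i) :
    thetaInt t G c ≤ ∑ i ∈ M, c (k i).card + c t * (cliqueSets t G \ M.biUnion e).card :=
  (thetaInt_le_sum hc (isCliqueOf_of_mem_chosenCliques ht hk) fun _ hT hTG =>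
    exists_mem_chosenCliques_superset he (mem_cliqueSets.mpr ⟨hT, hTG⟩)).trans
    (sum_chosenCliques_le hc hk)

theorem piInt_le_of_matching (ht : 1 ≤ t) (hc : ∀ i, 1 ≤ i → 0 ≤ c i)
    (hk : ∀ i ∈ M, IsCliqueOf G (k i))
    (he : ∀ i ∈ M, ∀ T : Finset V, T.card = t → (T ∈ e i ↔ T ⊆ k i))
    (hM : (M : Set I).PairwiseDisjoint e) :
    piInt t G c ≤ ∑ i ∈ M, c (k i).card + c t * (cliqueSets t G \ M.biUnion e).card :=
  (piInt_le_sum hc (isCliqueOf_of_mem_chosenCliques ht hk) fun _ hT hTG =>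
    existsUnique_mem_chosenCliques_superset he hM (mem_cliqueSets.mpr ⟨hT, hTG⟩)).trans
    (sum_chosenCliques_le hc hk)

end IntegerBounds

/-! ### Lifts along all maps -/

section AllMaps

variable {U V : Type*} {t : ℕ}

lemma isSymmFamily_id : IsSymmFamily (id : (U → V) → U → V) := fun τ =>
  ⟨(Equiv.refl U).arrowCongr τ, fun _ => rfl⟩

variable [Fintype U] [DecidableEq U] [Fintype V] [DecidableEq V]

lemma card_filter_apply_eq_mul {a b : U} (hab : a ≠ b) :
    (univ.filter fun ψ : U → V => ψ a = ψ b).card * Fintype.card V = Fintype.card (U → V) := by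
  let e := Equiv.funSplitAt a V
  have hcard : (univ.filter fun ψ : U → V => ψ a = ψ b).card =
      (univ : Finset ({u // u ≠ a} → V)).card := by
    refine card_bij' (fun ψ _ => (e ψ).2) (fun g _ => e.symm (g ⟨b, hab.symm⟩, g))
      (fun _ _ => mem_univ _) (fun g _ => ?_) (fun ψ hψ => ?_) fun g _ => ?_
    · simp [e, hab.symm]
    · refine e.symm_apply_eq.mpr (Prod.ext ?_ rfl)
      exact (mem_filter.mp hψ).2.symm
    · simp [e]
  rw [hcard, card_univ, Fintype.card_congr e, Fintype.card_prod, mul_comm]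

lemma card_not_injOn_mul_le {T : Finset U} (hT : T.card = t) :
    (univ.filter fun ψ : U → V => ¬ Set.InjOn ψ T).card * Fintype.card V ≤
      t ^ 2 * Fintype.card (U → V) := by
  have hsub : (univ.filter fun ψ : U → V => ¬ Set.InjOn ψ T) ⊆
      T.offDiag.biUnion fun p => univ.filter fun ψ : U → V => ψ p.1 = ψ p.2 := by
    intro ψ hψ
    simp only [mem_filter, mem_univ, true_and, Set.InjOn, not_forall] at hψ
    obtain ⟨a, ha, b, hb, h, hab⟩ := hψ
    exact mem_biUnion.mpr ⟨(a, b), mem_offDiag.mpr ⟨ha, hb, hab⟩, mem_filter.mpr ⟨mem_univ _, h⟩⟩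
  calc _ ≤ (∑ p ∈ T.offDiag, (univ.filter fun ψ : U → V => ψ p.1 = ψ p.2).card) *
        Fintype.card V := Nat.mul_le_mul_right _ ((card_le_card hsub).trans card_biUnion_le)
    _ = T.offDiag.card * Fintype.card (U → V) := by
        rw [sum_mul, sum_congr rfl fun p hp => card_filter_apply_eq_mul (mem_offDiag.mp hp).2.2,
          sum_const, smul_eq_mul]
    _ ≤ t ^ 2 * Fintype.card (U → V) := by
        rw [offDiag_card, hT, sq]
        exact Nat.mul_le_mul_right _ (Nat.sub_le _ _)

lemma le_card_injOn_mul {T : Finset U} (hT : T.card = t) :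
    (Fintype.card (U → V) : ℝ) * (Fintype.card V - (t : ℝ) ^ 2) ≤
      (univ.filter fun ψ : U → V => Set.InjOn ψ T).card * Fintype.card V := by
  have hnot : ((univ.filter fun ψ : U → V => ¬ Set.InjOn ψ T).card * Fintype.card V : ℝ) ≤
      t ^ 2 * Fintype.card (U → V) := mod_cast card_not_injOn_mul_le hT
  have hadd : ((univ.filter fun ψ : U → V => Set.InjOn ψ T).card : ℝ) +
      (univ.filter fun ψ : U → V => ¬ Set.InjOn ψ T).card = Fintype.card (U → V) :=
    mod_cast card_filter_add_card_filter_not (s := (univ : Finset (U → V)))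
      fun ψ => Set.InjOn ψ T
  rw [← hadd] at hnot ⊢
  linarith

lemma le_card_injPairs_mul (U V : Type*) [Fintype U] [DecidableEq U] [Fintype V] [DecidableEq V]
    (t : ℕ) :
    ((Fintype.card U).choose t * Fintype.card (U → V) : ℝ) * (Fintype.card V - (t : ℝ) ^ 2) ≤
      (injPairs (id : (U → V) → U → V) t).card * Fintype.card V := by
  have hsum : (injPairs (id : (U → V) → U → V) t).card =
      ∑ T ∈ powersetCard t (univ : Finset U),
        (univ.filter fun ψ : U → V => Set.InjOn ψ T).card := by
    rw [injPairs, card_filter, sum_product_right]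
    simp only [card_filter, id]
  rw [hsum, Nat.cast_sum, sum_mul, mul_assoc, ← nsmul_eq_mul, ← card_univ (α := U),
    ← card_powersetCard]
  exact card_nsmul_le_sum _ _ _ fun T hT => le_card_injOn_mul (mem_powersetCard_univ.mp hT)

lemma card_liftPairs_filter_mem_range_le {T : Finset V} {y z : V} (hy : y ∉ T) (hz : z ∉ T) :
    ((liftPairs (id : (U → V) → U → V) t T).filter fun p => y ∈ Set.range p.1).card ≤
      ((liftPairs (id : (U → V) → U → V) t T).filter fun p => z ∈ Set.range p.1).card := by
  have hswap : T.image (Equiv.swap y z) = T := by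
    refine (image_congr fun v hv => ?_).trans image_id
    exact Equiv.swap_apply_of_ne_of_ne (fun h => hy (h ▸ hv)) fun h => hz (h ▸ hv)
  refine card_le_card_of_injOn (fun p => (Equiv.swap y z ∘ p.1, p.2)) (fun p hp => ?_) ?_
  · obtain ⟨hp, u, hu⟩ := mem_filter.mp hp
    obtain ⟨hcard, himage⟩ := mem_liftPairs.mp hp
    refine mem_filter.mpr ⟨mem_liftPairs.mpr ⟨hcard, ?_⟩, u, by simp [hu]⟩
    change p.2.image (Equiv.swap y z ∘ p.1) = T
    rw [← image_image]
    exact (congrArg _ himage).trans hswap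
  · rintro ⟨ψ, A⟩ _ ⟨ψ', A'⟩ _ h
    rw [Prod.mk.injEq] at h ⊢
    exact ⟨(Equiv.swap y z).injective.comp_left h.1, h.2⟩

lemma card_liftPairs_filter_mem_range_mul_le {T : Finset V} {y : V} (hy : y ∉ T) :
    ((liftPairs (id : (U → V) → U → V) t T).filter fun p => y ∈ Set.range p.1).card *
        (Fintype.card V - T.card) ≤
      Fintype.card U * (liftPairs (id : (U → V) → U → V) t T).card := by
  set L := liftPairs (id : (U → V) → U → V) t T
  calc _ = ∑ z ∈ Tᶜ, (L.filter fun p => y ∈ Set.range p.1).card := by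
        rw [sum_const, card_compl, smul_eq_mul, mul_comm]
    _ ≤ ∑ z ∈ Tᶜ, (L.filter fun p => z ∈ Set.range p.1).card :=
        sum_le_sum fun z hz => card_liftPairs_filter_mem_range_le hy (mem_compl.mp hz)
    _ ≤ ∑ z, (L.filter fun p => z ∈ Set.range p.1).card := sum_le_sum_of_subset (subset_univ _)
    _ = ∑ p ∈ L, (univ.filter fun z => z ∈ Set.range p.1).card := by
        simp only [card_filter]
        exact sum_comm
    _ ≤ L.card • Fintype.card U := by
        refine sum_le_card_nsmul _ _ _ fun p _ => ?_
        have hrange : (univ.filter fun z => z ∈ Set.range p.1) = univ.image p.1 := by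
          ext z
          simp
        rw [hrange, ← card_univ]
        exact card_image_le
    _ = _ := by rw [smul_eq_mul, mul_comm]

end AllMaps

/-! ### Rounding -/

section Support

variable {I : Type*} [Fintype I] {w : I → ℝ}

lemma sum_subtype_ne_zero {F : I → ℝ} (hF : ∀ i, w i = 0 → F i = 0) :
    ∑ i : {i // w i ≠ 0}, F i = ∑ i, F i := by
  rw [← sum_subtype (univ.filter fun i => w i ≠ 0) (by simp) F]
  refine sum_subset (subset_univ _) fun i _ hi => hF i ?_
  simpa using hi

theorem exists_pairwiseDisjoint_of_isFracMatching_support (r : ℕ) {γ B : ℝ} (hγ : 0 < γ)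
    (hB : 0 < B) : ∃ δ : ℝ, 0 < δ ∧ ∀ {Ω I : Type*} [Fintype I] {e : I → Finset Ω} {w : I → ℝ}
      {X : Finset Ω}, IsFracMatching (fun i : {i // w i ≠ 0} => e i) (fun i => w i) X r δ →
      ∀ {cost : I → ℝ}, (∀ i, w i ≠ 0 → cost i ∈ Set.Icc 0 B) →
      ∃ M : Finset I, (∀ i ∈ M, w i ≠ 0) ∧ (M : Set I).PairwiseDisjoint e ∧
        ∑ i ∈ M, cost i + B * (X \ M.biUnion e).card ≤ ∑ i, w i * cost i + γ * X.card := by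
  obtain ⟨δ, hδ, hnibble⟩ := exists_pairwiseDisjoint_of_isFracMatching r (div_pos hγ hB)
  refine ⟨δ, hδ, fun {Ω I _ e w X} hF cost hcost => ?_⟩
  obtain ⟨M, hM, hle⟩ := hnibble _ _ _ hF (fun i => cost i / B)
    (fun i => div_nonneg (hcost i i.2).1 hB.le) fun i => (div_le_one hB).mpr (hcost i i.2).2
  refine ⟨M.map (Function.Embedding.subtype _), fun i hi => ?_, ?_, ?_⟩
  · obtain ⟨j, -, rfl⟩ := mem_map.mp hi
    exact j.2
  · rw [coe_map]
    rintro _ ⟨i, hi, rfl⟩ _ ⟨j, hj, rfl⟩ hij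
    exact hM hi hj fun h => hij (congrArg Subtype.val h)
  · have hunion : (M.map (Function.Embedding.subtype _)).biUnion e = M.biUnion fun i => e i := by
      rw [map_eq_image, image_biUnion]
      rfl
    have hsum : ∑ i : {i // w i ≠ 0}, w i * cost i = ∑ i, w i * cost i :=
      sum_subtype_ne_zero (F := fun i => w i * cost i) fun i hi => by rw [hi, zero_mul]
    rw [sum_map, hunion, ← hsum]
    simp only [mul_div_assoc', ← sum_div] at hle
    have hscaled := mul_le_mul_of_nonneg_left hle hB.le
    rw [mul_add, mul_add, mul_div_cancel₀ _ hB.ne', mul_div_cancel₀ _ hB.ne', ← mul_assoc,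
      mul_div_cancel₀ _ hB.ne'] at hscaled
    exact hscaled

end Support

section PushEdge

lemma ite_mem_image_eq_sum {U V : Type*} [Fintype U] [DecidableEq U] [DecidableEq V] {t : ℕ}
    {φ : U → V} {K : Finset U} (hK : Set.InjOn φ K) {E : Finset (Finset U)}
    (hE : E ⊆ powersetCard t K) (T : Finset V) (a : ℝ) :
    (if T ∈ E.image (image φ) then a else 0) =
      ∑ T' ∈ (powersetCard t univ).filter (fun T' : Finset U => T'.image φ = T),
        if T' ∈ E then a else 0 := by
  have hinj : Set.InjOn (image φ) (E : Set (Finset U)) :=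
    (image_injOn_powerset_of_injOn hK).mono fun T' hT' =>
      mem_coe.mpr (mem_powerset.mpr (mem_powersetCard.mp (hE (mem_coe.mp hT'))).1)
  rw [← sum_ite_eq' (E.image (image φ)) T fun _ => a, sum_image hinj, ← sum_filter, ← sum_filter]
  refine sum_congr (Finset.ext fun T' => ?_) fun _ _ => rfl
  have hcard : T' ∈ E → T'.card = t := fun hT' => (mem_powersetCard.mp (hE hT')).2
  simp only [mem_filter, mem_powersetCard_univ]
  tauto

/-- The set of `t`-subsets of `V` that the index `(ψ, K, E)` is responsible for. -/
def pushEdge {U V : Type*} [DecidableEq V] (i : (U → V) × Finset U × Finset (Finset U)) :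
    Finset (Finset V) :=
  i.2.2.image (image i.1)

lemma pushEdge_subset_cliqueSets {U V : Type*} [Fintype V] [DecidableEq V] {t : ℕ}
    {G : SimpleGraph V} {ψ : U → V} {p : Finset U × Finset (Finset U)}
    (hp : (G.comap ψ).IsClique (p.1 : Set U)) (hsub : p.2 ⊆ powersetCard t p.1) :
    pushEdge (ψ, p) ⊆ cliqueSets t G := by
  intro T hT
  obtain ⟨T', hT', rfl⟩ := mem_image.mp hT
  obtain ⟨hT'p, hcard⟩ := mem_powersetCard.mp (hsub hT')
  have hclique := hp.subset (coe_subset.mpr hT'p)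
  have hhom : ∀ u v, (G.comap ψ).Adj u v → G.Adj (ψ u) (ψ v) := fun _ _ h => h
  refine mem_cliqueSets.mpr ⟨?_, ?_⟩
  · exact (card_image_of_injOn (injOn_of_isClique hhom hclique)).trans hcard
  · exact (coe_image (f := ψ) (s := T')).symm ▸ isClique_image hhom hclique

variable {U V : Type} [Fintype U] [DecidableEq U] [Fintype V] [DecidableEq V] {t : ℕ}
  {G : SimpleGraph V}

lemma sum_ite_mem_pushEdge_eq_card {ψ : U → V} {g : Finset U × Finset (Finset U) → ℝ}
    (hg : IsThinned t (G.comap ψ) g) {T : Finset V} (hT : T ∈ cliqueSets t G) :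
    ∑ p, (if T ∈ pushEdge (ψ, p) then g p else 0) =
      ((powersetCard t univ).filter fun T' : Finset U => T'.image ψ = T).card := by
  obtain ⟨hTt, hTG⟩ := mem_cliqueSets.mp hT
  have hlift : ∀ p, (if T ∈ pushEdge (ψ, p) then g p else 0) =
      ∑ T' ∈ (powersetCard t univ).filter (fun T' : Finset U => T'.image ψ = T),
        if T' ∈ p.2 then g p else 0 := by
    intro p
    by_cases h0 : g p = 0
    · simp [h0]
    · have hinj : Set.InjOn ψ p.1 :=
        injOn_of_isClique (G := G) (H := G.comap ψ) (φ := ψ) (fun _ _ h => h) (hg.isClique p h0).2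
      exact ite_mem_image_eq_sum hinj (hg.subset p h0) T _
  have hdegree : ∀ T' ∈ (powersetCard t univ).filter (fun T' : Finset U => T'.image ψ = T),
      ∑ p, (if T' ∈ p.2 then g p else 0) = 1 := by
    intro T' hT'
    obtain ⟨hT't, himage⟩ := mem_filter.mp hT'
    rw [mem_powersetCard_univ] at hT't
    refine hg.degree T' hT't (isClique_comap_of_image (injOn_of_card_image_eq ?_) ?_)
    · rw [himage, hTt, hT't]
    · rwa [← coe_image, himage]
  rw [sum_congr rfl fun p _ => hlift p, sum_comm, sum_congr rfl hdegree, sum_const, nsmul_eq_mul,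
    mul_one]

variable {g : (U → V) → Finset U × Finset (Finset U) → ℝ}

lemma sum_ite_mem_pushEdge (hg : ∀ ψ, IsThinned t (G.comap ψ) (g ψ)) {T : Finset V}
    (hT : T ∈ cliqueSets t G) :
    ∑ i : (U → V) × Finset U × Finset (Finset U), (if T ∈ pushEdge i then g i.1 i.2 else 0) =
      (liftPairs (id : (U → V) → U → V) t T).card := by
  rw [Fintype.sum_prod_type, sum_congr rfl fun ψ _ => sum_ite_mem_pushEdge_eq_card (hg ψ) hT,
    liftPairs, card_filter, sum_product]
  simp only [card_filter, id]
  push_cast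
  rfl

lemma sum_ite_mem_pushEdge_and_le (hg : ∀ ψ, IsThinned t (G.comap ψ) (g ψ)) {T₁ T₂ : Finset V}
    (hT₁ : T₁ ∈ cliqueSets t G) {y : V} (hy : y ∈ T₂) :
    ∑ i : (U → V) × Finset U × Finset (Finset U),
      (if T₁ ∈ pushEdge i ∧ T₂ ∈ pushEdge i then g i.1 i.2 else 0) ≤
      ((liftPairs (id : (U → V) → U → V) t T₁).filter fun p => y ∈ Set.range p.1).card := by
  have hψ : ∀ ψ : U → V, ∑ p, (if T₁ ∈ pushEdge (ψ, p) ∧ T₂ ∈ pushEdge (ψ, p) then g ψ p else 0) ≤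
      ∑ T' ∈ powersetCard t (univ : Finset U),
        if T'.image ψ = T₁ ∧ y ∈ Set.range ψ then 1 else 0 := by
    intro ψ
    by_cases hyψ : y ∈ Set.range ψ
    · simp only [hyψ, and_true, sum_boole, ← sum_ite_mem_pushEdge_eq_card (hg ψ) hT₁]
      refine sum_le_sum fun p _ => ?_
      rw [ite_and]
      split_ifs
      exacts [le_rfl, (hg ψ).nonneg p, le_rfl]
    · simp only [hyψ, and_false, if_false, sum_const_zero]
      refine (sum_eq_zero fun p _ => if_neg fun h => hyψ ?_).le
      obtain ⟨T', -, rfl⟩ := mem_image.mp h.2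
      obtain ⟨u, -, hu⟩ := mem_image.mp hy
      exact ⟨u, hu⟩
  rw [Fintype.sum_prod_type]
  refine (sum_le_sum fun ψ _ => hψ ψ).trans_eq ?_
  rw [liftPairs, filter_filter, card_filter, sum_product]
  push_cast
  rfl

lemma sum_ite_mem_pushEdge_and_le_mul (hg : ∀ ψ, IsThinned t (G.comap ψ) (g ψ)) {Z δ : ℝ}
    (hZ : 0 ≤ Z)
    (hlift : ∀ T : Finset V, T.card = t →
      ((liftPairs (id : (U → V) → U → V) t T).card : ℝ) = Z)
    (htV : t < Fintype.card V) (hδ : (Fintype.card U : ℝ) ≤ δ * (Fintype.card V - t))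
    {T₁ T₂ : Finset V} (hT₁ : T₁ ∈ cliqueSets t G) (hT₂ : T₂ ∈ cliqueSets t G) (hT : T₁ ≠ T₂) :
    ∑ i : (U → V) × Finset U × Finset (Finset U),
      (if T₁ ∈ pushEdge i ∧ T₂ ∈ pushEdge i then g i.1 i.2 else 0) ≤ δ * Z := by
  obtain ⟨hT₁t, -⟩ := mem_cliqueSets.mp hT₁
  obtain ⟨hT₂t, -⟩ := mem_cliqueSets.mp hT₂
  obtain ⟨y, hy₂, hy₁⟩ := not_subset.mp fun h : T₂ ⊆ T₁ =>
    hT (eq_of_subset_of_card_le h (hT₁t.trans hT₂t.symm).le).symm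
  have hrange := card_liftPairs_filter_mem_range_mul_le (U := U) (t := t) hy₁
  rw [hT₁t, ← Nat.cast_le (α := ℝ), Nat.cast_mul, Nat.cast_mul, Nat.cast_sub htV.le,
    hlift T₁ hT₁t] at hrange
  have hVt : (0 : ℝ) < Fintype.card V - t := sub_pos.mpr (Nat.cast_lt.mpr htV)
  refine (sum_ite_mem_pushEdge_and_le hg hT₁ hy₂).trans
    (le_of_mul_le_mul_right (hrange.trans ?_) hVt)
  rw [mul_right_comm]
  exact mul_le_mul_of_nonneg_right hδ hZ

theorem isFracMatching_pushEdge (hg : ∀ ψ, IsThinned t (G.comap ψ) (g ψ)) {Z δ : ℝ} (hZ : 0 < Z)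
    (hlift : ∀ T : Finset V, T.card = t →
      ((liftPairs (id : (U → V) → U → V) t T).card : ℝ) = Z)
    (htV : t < Fintype.card V) (hδ : (Fintype.card U : ℝ) ≤ δ * (Fintype.card V - t)) :
    IsFracMatching (fun i : {i : (U → V) × Finset U × Finset (Finset U) // g i.1 i.2 / Z ≠ 0} =>
        pushEdge i.1)
      (fun i => g i.1.1 i.1.2 / Z) (cliqueSets t G) (Fintype.card (Finset U)) δ := by
  set w : (U → V) × Finset U × Finset (Finset U) → ℝ := fun i => g i.1 i.2 / Z
  have hne : ∀ i : {i // w i ≠ 0}, g i.1.1 i.1.2 ≠ 0 := fun i => (div_ne_zero_iff.mp i.2).1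
  refine ⟨fun i => div_nonneg ((hg _).nonneg _) hZ.le, fun i => ((hg _).nonempty _ (hne i)).image _,
    fun i => pushEdge_subset_cliqueSets ((hg _).isClique _ (hne i)).2 ((hg _).subset _ (hne i)),
    fun i => card_image_le.trans (card_le_univ _), fun T hT => ?_, fun T₁ hT₁ T₂ hT₂ hT => ?_⟩
  · have hdegree := sum_ite_mem_pushEdge hg hT
    rw [hlift T (mem_cliqueSets.mp hT).1, ← div_eq_one_iff_eq hZ.ne', sum_div] at hdegree
    simp only [ite_div, zero_div] at hdegree
    convert (sum_subtype_ne_zero (w := w) (F := fun i => if T ∈ pushEdge i then w i else 0)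
      fun i hi => by rw [hi, ite_self]).trans hdegree
  · have hcodegree := sum_ite_mem_pushEdge_and_le_mul hg hZ.le hlift htV hδ hT₁ hT₂ hT
    rw [← div_le_iff₀ hZ, sum_div] at hcodegree
    simp only [ite_div, zero_div] at hcodegree
    convert (sum_subtype_ne_zero (w := w)
      (F := fun i => if T₁ ∈ pushEdge i ∧ T₂ ∈ pushEdge i then w i else 0)
      fun i hi => by rw [hi, ite_self]).trans_le hcodegree

end PushEdge

section Rounding

variable {U V : Type*} [Fintype U] [DecidableEq U] [Fintype V] [DecidableEq V] [Nonempty V]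
  {t : ℕ} {γ : ℝ}

lemma choose_mul_card_le_card_injPairs (hγ : 0 ≤ γ)
    (hV : (1 + γ) * (t : ℝ) ^ 2 ≤ γ * Fintype.card V) :
    ((Fintype.card U).choose t * Fintype.card (U → V) : ℝ) ≤
      (1 + γ) * (injPairs (id : (U → V) → U → V) t).card := by
  have hV0 : (0 : ℝ) < Fintype.card V := Nat.cast_pos.mpr Fintype.card_pos
  have hle : (Fintype.card V : ℝ) ≤ (1 + γ) * (Fintype.card V - (t : ℝ) ^ 2) := by linarith
  refine le_of_mul_le_mul_right ?_ hV0
  calc ((Fintype.card U).choose t * Fintype.card (U → V) : ℝ) * Fintype.card V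
      ≤ (Fintype.card U).choose t * Fintype.card (U → V) *
          ((1 + γ) * (Fintype.card V - (t : ℝ) ^ 2)) := by gcongr
    _ = (1 + γ) * ((Fintype.card U).choose t * Fintype.card (U → V) *
          (Fintype.card V - (t : ℝ) ^ 2)) := by ring
    _ ≤ (1 + γ) * ((injPairs (id : (U → V) → U → V) t).card * Fintype.card V) :=
        mul_le_mul_of_nonneg_left (le_card_injPairs_mul U V t) (by positivity)
    _ = _ := by ring

lemma card_injPairs_pos (htU : t ≤ Fintype.card U) (hγ : 0 ≤ γ)
    (hV : (1 + γ) * (t : ℝ) ^ 2 ≤ γ * Fintype.card V) :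
    0 < (injPairs (id : (U → V) → U → V) t).card := by
  have hpos : (0 : ℝ) < (Fintype.card U).choose t * Fintype.card (U → V) :=
    mul_pos (Nat.cast_pos.mpr (Nat.choose_pos htU)) (Nat.cast_pos.mpr Fintype.card_pos)
  exact Nat.cast_pos.mp
    (pos_of_mul_pos_right (hpos.trans_le (choose_mul_card_le_card_injPairs hγ hV)) (by positivity))

lemma sum_div_card_injPairs_le (htU : t ≤ Fintype.card U) (hγ : 0 ≤ γ)
    (hV : (1 + γ) * (t : ℝ) ^ 2 ≤ γ * Fintype.card V) {cost : (U → V) → ℝ}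
    (hcost : ∀ ψ, 0 ≤ cost ψ) :
    (∑ ψ, cost ψ) / (injPairs (id : (U → V) → U → V) t).card ≤
      (𝔼 ψ, cost ψ / (Fintype.card U).choose t) * (1 + γ) := by
  have hinj : (0 : ℝ) < (injPairs (id : (U → V) → U → V) t).card :=
    Nat.cast_pos.mpr (card_injPairs_pos htU hγ hV)
  have hU : (0 : ℝ) < (Fintype.card U).choose t := Nat.cast_pos.mpr (Nat.choose_pos htU)
  have hmaps : (0 : ℝ) < Fintype.card (U → V) := Nat.cast_pos.mpr Fintype.card_pos
  rw [← expect_div, Fintype.expect_eq_sum_div_card, div_div, div_mul_eq_mul_div, mul_comm _ (1 + γ),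
    div_le_div_iff₀ hinj (mul_pos hmaps hU), mul_comm (1 + γ), mul_assoc]
  refine mul_le_mul_of_nonneg_left ?_ (sum_nonneg fun ψ _ => hcost ψ)
  rw [mul_comm]
  exact choose_mul_card_le_card_injPairs hγ hV

end Rounding

lemma IsThinned.sum_cost_nonneg {U : Type} [Fintype U] [DecidableEq U] {t : ℕ} {H : SimpleGraph U}
    {g : Finset U × Finset (Finset U) → ℝ} (hg : IsThinned t H g) {c : ℕ → ℝ}
    (hc : ∀ i, 1 ≤ i → 0 ≤ c i) : 0 ≤ ∑ p, c p.1.card * g p := by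
  refine sum_nonneg fun p _ => ?_
  by_cases hp : g p = 0
  · rw [hp, mul_zero]
  · exact mul_nonneg (hc _ (hg.isClique p hp).1.card_pos) (hg.nonneg p)

lemma sum_weight_mul_cost_le {U V : Type} [Fintype U] [DecidableEq U] [Fintype V] [DecidableEq V]
    [Nonempty V] {t : ℕ} {G : SimpleGraph V} {g : (U → V) → Finset U × Finset (Finset U) → ℝ}
    (hg : ∀ ψ, IsThinned t (G.comap ψ) (g ψ)) (htU : t ≤ Fintype.card U) {c : ℕ → ℝ}
    (hc : ∀ i, 1 ≤ i → 0 ≤ c i) {γ : ℝ} (hγ : 0 ≤ γ)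
    (hV : (1 + γ) * (t : ℝ) ^ 2 ≤ γ * Fintype.card V) :
    ∑ i : (U → V) × Finset U × Finset (Finset U),
      g i.1 i.2 / ((injPairs (id : (U → V) → U → V) t).card / (Fintype.card V).choose t) *
        c i.2.1.card ≤
      (Fintype.card V).choose t *
        ((𝔼 ψ, (∑ p, c p.1.card * g ψ p) / (Fintype.card U).choose t) * (1 + γ)) := by
  simp only [div_mul_eq_mul_div, mul_comm (g _ _), ← sum_div]
  rw [Fintype.sum_prod_type, div_div_eq_mul_div, mul_comm _ ((Nat.choose _ _ : ℕ) : ℝ),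
    mul_div_assoc]
  gcongr
  exact sum_div_card_injPairs_le htU hγ hV fun ψ => (hg ψ).sum_cost_nonneg hc

theorem exists_pairwiseDisjoint_pushEdge {U : Type} [Fintype U] [DecidableEq U] {t : ℕ}
    (htU : t ≤ Fintype.card U) {c : ℕ → ℝ} (hc : ∀ i, 1 ≤ i → 0 ≤ c i) {γ : ℝ} (hγ : 0 < γ) :
    ∃ δ : ℝ, 0 < δ ∧ ∀ {V : Type} [Fintype V] [DecidableEq V], t < Fintype.card V →
      (Fintype.card U : ℝ) ≤ δ * (Fintype.card V - t) →
      (1 + γ) * (t : ℝ) ^ 2 ≤ γ * Fintype.card V →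
      ∀ {G : SimpleGraph V} {g : (U → V) → Finset U × Finset (Finset U) → ℝ},
      (∀ ψ, IsThinned t (G.comap ψ) (g ψ)) →
      ∃ M : Finset ((U → V) × Finset U × Finset (Finset U)), (∀ i ∈ M, g i.1 i.2 ≠ 0) ∧
        (M : Set ((U → V) × Finset U × Finset (Finset U))).PairwiseDisjoint pushEdge ∧
        ∑ i ∈ M, c i.2.1.card + c t * (cliqueSets t G \ M.biUnion pushEdge).card ≤
          (Fintype.card V).choose t *
            ((𝔼 ψ, (∑ p, c p.1.card * g ψ p) / (Fintype.card U).choose t) * (1 + γ) + γ) := by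
  obtain ⟨B, hB⟩ := ((range (Fintype.card U + 1)).image c).exists_le
  have hcB : ∀ k ≤ Fintype.card U, c k ≤ max B 1 := fun k hk =>
    (hB _ (mem_image_of_mem c (mem_range_succ_iff.mpr hk))).trans (le_max_left _ _)
  obtain ⟨δ, hδ, hround⟩ := exists_pairwiseDisjoint_of_isFracMatching_support
    (Fintype.card (Finset U)) hγ (lt_max_of_lt_right one_pos : 0 < max B 1)
  refine ⟨δ, hδ, fun {V _ _} htV hUV hV {G g} hg => ?_⟩
  have : Nonempty V := Fintype.card_pos_iff.mp (by omega)
  set Z : ℝ := (injPairs (id : (U → V) → U → V) t).card / (Fintype.card V).choose t with hZ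
  have hchoose : (0 : ℝ) < (Fintype.card V).choose t := Nat.cast_pos.mpr (Nat.choose_pos htV.le)
  have hZ0 : 0 < Z := div_pos (Nat.cast_pos.mpr (card_injPairs_pos htU hγ.le hV)) hchoose
  have hlift : ∀ T : Finset V, T.card = t →
      ((liftPairs (id : (U → V) → U → V) t T).card : ℝ) = Z := fun T hT => by
    rw [hZ, eq_div_iff hchoose.ne']
    exact_mod_cast isSymmFamily_id.card_liftPairs_mul_choose hT
  have hcost : ∀ i : (U → V) × Finset U × Finset (Finset U), g i.1 i.2 / Z ≠ 0 →
      c i.2.1.card ∈ Set.Icc 0 (max B 1) := fun i hi =>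
    ⟨hc _ ((hg _).isClique _ (div_ne_zero_iff.mp hi).1).1.card_pos, hcB _ (card_le_univ _)⟩
  obtain ⟨M, hM, hdisj, hle⟩ :=
    hround (isFracMatching_pushEdge hg hZ0 hlift htV hUV) hcost
  refine ⟨M, fun i hi => (div_ne_zero_iff.mp (hM i hi)).1, hdisj, ?_⟩
  calc ∑ i ∈ M, c i.2.1.card + c t * (cliqueSets t G \ M.biUnion pushEdge).card
      ≤ ∑ i ∈ M, c i.2.1.card + max B 1 * (cliqueSets t G \ M.biUnion pushEdge).card := by
        gcongr
        exact hcB t htU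
    _ ≤ ∑ i : (U → V) × Finset U × Finset (Finset U), g i.1 i.2 / Z * c i.2.1.card +
          γ * (cliqueSets t G).card := by convert hle
    _ ≤ (Fintype.card V).choose t * ((𝔼 ψ, (∑ p, c p.1.card * g ψ p) /
          (Fintype.card U).choose t) * (1 + γ)) + γ * (Fintype.card V).choose t := by
        gcongr
        · exact sum_weight_mul_cost_le hg htU hc hγ.le hV
        · exact card_cliqueSets_le t G
    _ = _ := by ring

/-! ### Integer covers and decompositions -/

section Integer

open Filter

section PushEdge

variable {U V : Type*} [DecidableEq V] {t : ℕ} {ψ : U → V} {K : Finset U}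

lemma subset_image_of_mem_pushEdge {i : (U → V) × Finset U × Finset (Finset U)}
    (hi : i.2.2 ⊆ powersetCard t i.2.1) {T : Finset V} (hT : T ∈ pushEdge i) :
    T ⊆ i.2.1.image i.1 := by
  obtain ⟨T', hT', rfl⟩ := mem_image.mp hT
  exact image_subset_image (mem_powersetCard.mp (hi hT')).1

lemma mem_pushEdge_powersetCard_iff (hK : Set.InjOn ψ K) {T : Finset V} (hT : T.card = t) :
    T ∈ pushEdge (ψ, K, powersetCard t K) ↔ T ⊆ K.image ψ := by
  refine ⟨subset_image_of_mem_pushEdge (i := (ψ, K, powersetCard t K)) subset_rfl, fun h => ?_⟩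
  obtain ⟨T', hT', rfl⟩ := subset_image_iff.mp h
  refine mem_image_of_mem _ (mem_powersetCard.mpr ⟨coe_subset.mp hT', ?_⟩)
  rw [← hT, card_image_of_injOn (hK.mono hT')]

end PushEdge

section Comap

variable {U V : Type} [Fintype U] [DecidableEq U] {G : SimpleGraph V} {ψ : U → V} {K : Finset U}

lemma injOn_of_isCliqueOf_comap (hK : IsCliqueOf (G.comap ψ) K) : Set.InjOn ψ K :=
  injOn_of_isClique (G := G) (H := G.comap ψ) (φ := ψ) (fun _ _ h => h) hK.2

lemma isCliqueOf_image [Fintype V] [DecidableEq V] (hK : IsCliqueOf (G.comap ψ) K) :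
    IsCliqueOf G (K.image ψ) :=
  ⟨hK.1.image ψ, (coe_image (f := ψ) (s := K)).symm ▸
    isClique_image (G := G) (H := G.comap ψ) (φ := ψ) (fun _ _ h => h) hK.2⟩

end Comap

variable {t s : ℕ} {c : ℕ → ℝ} {γ : ℝ}

lemma expect_div_choose_le {V : Type} [Fintype V] [Nonempty V] {S : Set ℝ}
    {G : SimpleGraph V} (hts : t ≤ s) (hγ : 0 ≤ γ) {cost : (Fin s → V) → ℝ}
    (hcost : ∀ ψ, cost ψ ≤ fracVal S t (G.comap ψ) c + γ) :
    𝔼 ψ, cost ψ / (Fintype.card (Fin s)).choose t ≤ avgDensity S t c G s + γ := by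
  have hchoose : (1 : ℝ) ≤ (Fintype.card (Fin s)).choose t := by
    rw [Fintype.card_fin]
    exact_mod_cast Nat.choose_pos hts
  calc 𝔼 ψ, cost ψ / (Fintype.card (Fin s)).choose t
      ≤ 𝔼 ψ : Fin s → V, (fracDensity S t (G.comap ψ) c + γ) := by
        refine expect_le_expect fun ψ _ => (div_le_div_of_nonneg_right (hcost ψ)
          (zero_le_one.trans hchoose)).trans ?_
        rw [add_div]
        exact add_le_add_right (div_le_self hγ hchoose) _
    _ = avgDensity S t c G s + γ := by
        rw [expect_add_distrib, Fintype.expect_const, avgDensity]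

theorem eventually_exists_pairwiseDisjoint_pushEdge (hts : t ≤ s) (hc : ∀ i, 1 ≤ i → 0 ≤ c i)
    (hγ : 0 < γ) : ∀ᶠ n in atTop, ∀ {S : Set ℝ} {G : SimpleGraph (Fin n)}
      {g : (Fin s → Fin n) → Finset (Fin s) × Finset (Finset (Fin s)) → ℝ},
      (∀ ψ, IsThinned t (G.comap ψ) (g ψ)) →
      (∀ ψ, ∑ p, c p.1.card * g ψ p ≤ fracVal S t (G.comap ψ) c + γ) →
      ∃ M : Finset ((Fin s → Fin n) × Finset (Fin s) × Finset (Finset (Fin s))),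
        (∀ i ∈ M, g i.1 i.2 ≠ 0) ∧ (SetLike.coe M).PairwiseDisjoint pushEdge ∧
        ∑ i ∈ M, c (i.2.1.image i.1).card + c t * (cliqueSets t G \ M.biUnion pushEdge).card ≤
          n.choose t * ((avgDensity S t c G s + γ) * (1 + γ) + γ) := by
  have htU : t ≤ Fintype.card (Fin s) := by rwa [Fintype.card_fin]
  obtain ⟨δ, hδ, hround⟩ := exists_pairwiseDisjoint_pushEdge htU hc hγ
  have hlarge := fun x : ℝ => tendsto_natCast_atTop_atTop.eventually_ge_atTop x
  filter_upwards [eventually_gt_atTop t, hlarge (s / δ + t), hlarge ((1 + γ) * (t : ℝ) ^ 2 / γ)]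
    with n hnt hnδ hnγ S G g hg hcost
  have : Nonempty (Fin n) := ⟨⟨0, by omega⟩⟩
  obtain ⟨M, hM, hdisj, hle⟩ := hround (V := Fin n) (by rwa [Fintype.card_fin])
    (by rw [Fintype.card_fin, Fintype.card_fin, ← div_le_iff₀' hδ]; linarith)
    (by rwa [Fintype.card_fin, ← div_le_iff₀' hγ]) hg
  refine ⟨M, hM, hdisj, ?_⟩
  have hcard : ∀ i ∈ M, (i.2.1.image i.1).card = i.2.1.card := fun i hi =>
    card_image_of_injOn (injOn_of_isCliqueOf_comap ((hg _).isClique _ (hM i hi)))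
  rw [sum_congr rfl fun i hi => congrArg c (hcard i hi)]
  refine hle.trans ?_
  rw [Fintype.card_fin n]
  gcongr
  exact expect_div_choose_le hts hγ.le hcost

theorem eventually_thetaInt_le (ht : 1 ≤ t) (hts : t ≤ s) (hc : ∀ i, 1 ≤ i → 0 ≤ c i)
    (hγ : 0 < γ) : ∀ᶠ n in atTop, ∀ G : SimpleGraph (Fin n), thetaInt t G c ≤
      n.choose t * ((avgDensity (Set.Ici 1) t c G s + γ) * (1 + γ) + γ) := by
  filter_upwards [eventually_exists_pairwiseDisjoint_pushEdge hts hc hγ] with n hround G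
  choose f hf hfcost using fun ψ : Fin s → Fin n =>
    exists_cliqueCost_lt (c := c) Set.self_mem_Ici ht (G.comap ψ) hγ
  have hg := fun ψ => (hf ψ).isThinned_thinning subset_rfl
  obtain ⟨M, hM, -, hle⟩ := hround hg fun ψ =>
    ((hf ψ).sum_cost_thinning_le subset_rfl hc).trans (hfcost ψ).le
  exact (thetaInt_le_of_matching ht hc
    (fun i hi => isCliqueOf_image ((hg _).isClique _ (hM i hi))) fun i hi _ hT =>
      subset_image_of_mem_pushEdge ((hg _).subset _ (hM i hi)) hT).trans hle

theorem eventually_piInt_le (ht : 1 ≤ t) (hts : t ≤ s) (hc : ∀ i, 1 ≤ i → 0 ≤ c i)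
    (hγ : 0 < γ) : ∀ᶠ n in atTop, ∀ G : SimpleGraph (Fin n), piInt t G c ≤
      n.choose t * ((avgDensity {1} t c G s + γ) * (1 + γ) + γ) := by
  filter_upwards [eventually_exists_pairwiseDisjoint_pushEdge hts hc hγ] with n hround G
  choose f hf hfcost using fun ψ : Fin s → Fin n =>
    exists_cliqueCost_lt (c := c) (Set.mem_singleton (1 : ℝ)) ht (G.comap ψ) hγ
  have hS : ({1} : Set ℝ) ⊆ Set.Ici 1 := Set.singleton_subset_iff.mpr Set.self_mem_Ici
  have hg := fun ψ => (hf ψ).isThinned_thinning hS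
  obtain ⟨M, hM, hdisj, hle⟩ := hround hg fun ψ =>
    ((hf ψ).sum_cost_thinning_le hS hc).trans (hfcost ψ).le
  refine (piInt_le_of_matching ht hc
    (fun i hi => isCliqueOf_image ((hg _).isClique _ (hM i hi))) (fun i hi T hT => ?_)
    hdisj).trans hle
  rw [← mem_pushEdge_powersetCard_iff
    (injOn_of_isCliqueOf_comap ((hg _).isClique _ (hM i hi))) hT,
    ← (hf _).eq_powersetCard_of_thinning_ne_zero (hM i hi)]

end Integer

/-! ### Choice of the parameters -/

section Parameters

open Filter

variable {t : ℕ} {c : ℕ → ℝ}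

lemma exists_concentration_params (b : ℝ) {ε : ℝ} (hε : 0 < ε) :
    ∃ R m : ℕ, 0 < R ∧ 0 < m ∧ ∃ η : ℝ, 0 < η ∧
      2 * b / R + 2 * (η + b ^ 2 / (m * η)) ≤ ε := by
  obtain ⟨R, hR, hR0⟩ := ((tendsto_const_div_atTop_nhds_zero_nat (2 * b)).eventually_le_const
    (half_pos hε) |>.and (eventually_gt_atTop 0)).exists
  obtain ⟨m, hm, hm0⟩ :=
    ((tendsto_const_div_atTop_nhds_zero_nat (b ^ 2 / (ε / 8))).eventually_le_const
      (by positivity : 0 < ε / 8) |>.and (eventually_gt_atTop 0)).exists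
  refine ⟨R, m, hR0, hm0, ε / 8, by positivity, ?_⟩
  rw [div_div, mul_comm (ε / 8)] at hm
  linarith

lemma exists_pos_le_one_mul_le (b : ℝ) {ε : ℝ} (hε : 0 < ε) :
    ∃ γ : ℝ, 0 < γ ∧ γ ≤ 1 ∧ γ * b ≤ ε := by
  obtain ⟨γ, hγ, hlt⟩ := exists_pos_mul_lt hε |b|
  refine ⟨min 1 γ, lt_min one_pos hγ, min_le_left _ _, ?_⟩
  calc min 1 γ * b ≤ min 1 γ * |b| := by gcongr; exact le_abs_self b
    _ ≤ γ * |b| := by gcongr; exact min_le_right _ _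
    _ ≤ ε := by linarith

theorem eventually_exists_blowUp (ht : 2 ≤ t) (hc : ∀ i, 1 ≤ i → 0 ≤ c i) {s : ℕ} (hts : t ≤ s)
    {γ : ℝ} (hγ : 0 < γ) (hs : t * (t / s : ℝ) ≤ γ / 2) :
    ∀ᶠ n in atTop, ∀ H : SimpleGraph (Fin s), ∃ Gt : SimpleGraph (Fin n), ∀ S : Set ℝ,
      Convex ℝ S → 1 ∈ S →
      (1 - γ) * ((n : ℝ) ^ t / t.factorial) * fracDensity S t H c ≤ fracVal S t Gt c := by
  have hn := ((tendsto_const_div_atTop_nhds_zero_nat (t * s : ℝ)).eventually_le_const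
    (half_pos hγ))
  filter_upwards [hn, eventually_ge_atTop s] with n hn hsn H
  obtain ⟨Gt, hGt⟩ := exists_blowUp ht hc hts hsn H
  refine ⟨Gt, fun S hS h1 => le_trans ?_ (hGt S hS h1)⟩
  have hH : 0 ≤ fracDensity S t H c := fracDensity_nonneg H hc
  gcongr
  rw [mul_div_assoc] at hn
  linarith

lemma choose_mul_le_fracVal_add {S : Set ℝ} (h1 : 1 ∈ S) (ht : 1 ≤ t)
    (hc : ∀ i, 1 ≤ i → 0 ≤ c i) {n s : ℕ} [Nonempty (Fin n)] {G Gt : SimpleGraph (Fin n)}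
    {ψ : Fin s → Fin n} {γ ρ : ℝ} (hγ : 0 ≤ γ) (hγ1 : γ ≤ 1) (hγρ : γ * (2 * c t + 3) ≤ ρ / 2)
    (hψ : avgDensity S t c G s - ρ / 2 ≤ fracDensity S t (G.comap ψ) c)
    (hGt : (1 - γ) * ((n : ℝ) ^ t / t.factorial) * fracDensity S t (G.comap ψ) c ≤
      fracVal S t Gt c) :
    n.choose t * ((avgDensity S t c G s + γ) * (1 + γ) + γ) ≤
      fracVal S t Gt c + ρ * (n : ℝ) ^ t := by
  have havg : 0 ≤ avgDensity S t c G s := avgDensity_nonneg G hc s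
  have hρ : 0 ≤ ρ := by
    have := mul_nonneg hγ (by linarith [hc t ht] : 0 ≤ 2 * c t + 3)
    linarith
  have hdensity : (avgDensity S t c G s + γ) * (1 + γ) + γ ≤
      (1 - γ) * fracDensity S t (G.comap ψ) c + ρ := by
    have := mul_le_mul_of_nonneg_left (avgDensity_le h1 ht G hc s) hγ
    have := mul_le_mul_of_nonneg_left (fracDensity_le h1 ht (G.comap ψ) hc) hγ
    have := mul_le_mul_of_nonneg_left hγ1 hγ
    linarith
  calc n.choose t * ((avgDensity S t c G s + γ) * (1 + γ) + γ)
      ≤ (n : ℝ) ^ t / t.factorial * ((1 - γ) * fracDensity S t (G.comap ψ) c + ρ) := by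
        gcongr
        exact Nat.choose_le_pow_div t n
    _ = (1 - γ) * ((n : ℝ) ^ t / t.factorial) * fracDensity S t (G.comap ψ) c +
          ρ * ((n : ℝ) ^ t / t.factorial) := by ring
    _ ≤ fracVal S t Gt c + ρ * (n : ℝ) ^ t := by
        gcongr
        exact div_le_self (by positivity) (Nat.one_le_cast.mpr t.factorial_pos)

theorem exists_forall_ge_eventually_exists (ht : 2 ≤ t) (hc : ∀ i, 1 ≤ i → 0 ≤ c i) {ρ : ℝ}
    (hρ : 0 < ρ) : ∃ s₀, t ≤ s₀ ∧ ∀ s ≥ s₀, ∀ᶠ n in atTop, ∀ (G : SimpleGraph (Fin n))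
      (ψ : Fin s → Fin n),
      avgDensity (Set.Ici 1) t c G s - ρ / 2 ≤ fracDensity (Set.Ici 1) t (G.comap ψ) c →
      avgDensity {1} t c G s - ρ / 2 ≤ fracDensity {1} t (G.comap ψ) c →
      ∃ Gt : SimpleGraph (Fin n), thetaInt t G c ≤ thetaFrac t Gt c + ρ * (n : ℝ) ^ t ∧
        piInt t G c ≤ piFrac t Gt c + ρ * (n : ℝ) ^ t := by
  obtain ⟨γ, hγ, hγ1, hγρ⟩ := exists_pos_le_one_mul_le (2 * c t + 3) (half_pos hρ)
  obtain ⟨s₀, hs₀⟩ := eventually_atTop.mp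
    ((tendsto_const_div_atTop_nhds_zero_nat (t * t : ℝ)).eventually_le_const (half_pos hγ) |>.and
      (eventually_ge_atTop t))
  have ht1 : 1 ≤ t := one_le_two.trans ht
  refine ⟨s₀, (hs₀ s₀ le_rfl).2, fun s hs => ?_⟩
  obtain ⟨htts, hts⟩ := hs₀ s hs
  rw [mul_div_assoc] at htts
  filter_upwards [eventually_thetaInt_le ht1 hts hc hγ, eventually_piInt_le ht1 hts hc hγ,
    eventually_exists_blowUp ht hc hts hγ htts, eventually_gt_atTop 0]
    with n htheta hpi hblowUp hn G ψ hψtheta hψpi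
  have : Nonempty (Fin n) := ⟨⟨0, hn⟩⟩
  obtain ⟨Gt, hGt⟩ := hblowUp (G.comap ψ)
  refine ⟨Gt, (htheta G).trans ?_, (hpi G).trans ?_⟩
  · rw [← fracVal_Ici_one]
    exact choose_mul_le_fracVal_add Set.self_mem_Ici ht1 hc hγ.le hγ1 hγρ hψtheta
      (hGt _ (convex_Ici 1) Set.self_mem_Ici)
  · rw [← fracVal_singleton_one]
    exact choose_mul_le_fracVal_add (Set.mem_singleton 1) ht1 hc hγ.le hγ1 hγρ hψpi
      (hGt _ (convex_singleton 1) (Set.mem_singleton 1))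

end Parameters

theorem stmt6_general (t : ℕ) (ht : 2 ≤ t) (c : ℕ → ℝ) (hc : ∀ i, 1 ≤ i → 0 ≤ c i) :
    ∀ ρ : ℝ, 0 < ρ → ∃ n₀ : ℕ, ∀ n : ℕ, n₀ < n → ∀ G : SimpleGraph (Fin n),
      ∃ Gt : SimpleGraph (Fin n),
        thetaInt t G c ≤ thetaFrac t Gt c + ρ * (n : ℝ) ^ t ∧
        piInt t G c ≤ piFrac t Gt c + ρ * (n : ℝ) ^ t := by
  intro ρ hρ
  obtain ⟨s₀, hts₀, hs₀⟩ := exists_forall_ge_eventually_exists ht hc hρ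
  obtain ⟨R, m, hR, hm, η, hη, hε⟩ := exists_concentration_params (c t) (half_pos hρ)
  have hsize : ∀ j, s₀ ≤ m ^ (j + 1) * s₀ := fun j => Nat.le_mul_of_pos_left _ (pow_pos hm _)
  obtain ⟨n₀, hn₀⟩ := Filter.eventually_atTop.mp
    ((Filter.eventually_all_finset (range R)).mpr fun j _ => hs₀ _ (hsize j))
  refine ⟨n₀, fun n hn G => ?_⟩
  have : Nonempty (Fin n) := ⟨⟨0, by omega⟩⟩
  obtain ⟨j, hj, ψ, htheta, hpi⟩ := exists_avgDensity_sub_le_fracDensity (convex_Ici (1 : ℝ))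
    Set.self_mem_Ici (convex_singleton (1 : ℝ)) (Set.mem_singleton 1) (one_le_two.trans ht) hc
    hts₀ hm hR hη hε G
  exact hn₀ n hn.le j (mem_range.mpr hj) G ψ htheta hpi

/-- Theorem 1.9: for every `ρ > 0`, for all sufficiently large `n`, for every
`n`-vertex graph `G` there is an `n`-vertex graph `G̃` such that
`θ_t(G,c) ≤ θ*_t(G̃,c) + ρ nᵗ` and `π_t(G,c) ≤ π*_t(G̃,c) + ρ nᵗ`. -/
theorem stmt6 (t : ℕ) (ht : 2 ≤ t) (c : ℕ → ℝ) (hc : ∀ i, 1 ≤ i → 0 ≤ c i)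
    (hc1 : ∀ i, t ≤ i → 1 ≤ c i) :
    ∀ ρ : ℝ, 0 < ρ → ∃ n₀ : ℕ, ∀ n : ℕ, n₀ < n → ∀ G : SimpleGraph (Fin n),
      ∃ Gt : SimpleGraph (Fin n),
        thetaInt t G c ≤ thetaFrac t Gt c + ρ * (n : ℝ) ^ t ∧
        piInt t G c ≤ piFrac t Gt c + ρ * (n : ℝ) ^ t :=
  stmt6_general t ht c hc
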